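/- For every r in (1,2) there is a constant C_r > 0 with the following property: for every δ > 0 there is a constant C_{r,δ} > 0 such that for every integer y ≥ 1, every integer N > exp(C_{r,δ} y^δ), every integer b with gcd(b,y) = 1, and every finitely supported f : ℤ → ℝ, one has ‖A_{N,y,b} f‖_{ℓ^{r'}} ≤ C_r (y/N)^{1/r − 1/r'} ‖f‖_{ℓ^r}, where r' = r/(r−1) is the conjugate exponent. -/

import Mathlib

open scoped ENNReal

noncomputable section

/-- The prime-progression average `A_{N,y,b} f`. -/
def pavg (N y : ℕ) (b : ℤ) (f : ℤ → ℝ) (x : ℤ) : ℝ :=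
  (Nat.totient y : ℝ) / (N : ℝ) *
    ∑ n ∈ (Finset.range N).filter (fun n : ℕ => (n : ℤ) % (y : ℤ) = b % (y : ℤ)),
      ArithmeticFunction.vonMangoldt n * f (x - n)

/-- The `ℓ^p(ℤ)` norm, valued in `ℝ≥0∞`. -/
def lpNorm (p : ℝ) (g : ℤ → ℝ) : ℝ≥0∞ :=
  (∑' x : ℤ, (‖g x‖₊ : ℝ≥0∞) ^ p) ^ (1 / p)

/-- The bilinear form on a finite window of `ℤ` attached to the convolution kernel `κ`. -/
def convForm (κ : ℤ → ℂ) (E : Finset ℤ) (f g : ℤ → ℂ) : ℂ :=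
  ∑ a ∈ E, ∑ x ∈ E, κ (x - a) * f a * g x

/-- The `ℓ^s` norm of `f` on the finite window `E`. -/
def windowNorm (s : ℝ) (E : Finset ℤ) (f : ℤ → ℂ) : ℝ :=
  (∑ a ∈ E, ‖f a‖ ^ s) ^ (1 / s)

lemma windowNorm_nonneg (s : ℝ) (E : Finset ℤ) (f : ℤ → ℂ) : 0 ≤ windowNorm s E f :=
  Real.rpow_nonneg (Finset.sum_nonneg fun _ _ => Real.rpow_nonneg (norm_nonneg _) _) _

lemma windowNorm_rpow {s : ℝ} (hs : 0 < s) (E : Finset ℤ) (f : ℤ → ℂ) :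
    windowNorm s E f ^ s = ∑ a ∈ E, ‖f a‖ ^ s := by
  have h : 0 ≤ ∑ a ∈ E, ‖f a‖ ^ s :=
    Finset.sum_nonneg fun _ _ => Real.rpow_nonneg (norm_nonneg _) _
  rw [windowNorm, ← Real.rpow_mul h, one_div, inv_mul_cancel₀ hs.ne', Real.rpow_one]

lemma norm_eq_zero_of_windowNorm_eq_zero {s : ℝ} (hs : 0 < s) {E : Finset ℤ} {f : ℤ → ℂ}
    (h : windowNorm s E f = 0) {a : ℤ} (ha : a ∈ E) : f a = 0 := by
  have h1 := windowNorm_rpow hs E f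
  rw [h, Real.zero_rpow hs.ne'] at h1
  have h2 := (Finset.sum_eq_zero_iff_of_nonneg
    (fun b _ => Real.rpow_nonneg (norm_nonneg (f b)) s)).1 h1.symm a ha
  rw [Real.rpow_eq_zero (norm_nonneg _) hs.ne'] at h2
  exact norm_eq_zero.1 h2

lemma young_pointwise {p s k u v : ℝ} (hp : 1 ≤ p) (hs : 0 < s) (hps : 1 / s = 1 - 1 / (2 * p))
    (hk : 0 ≤ k) (hu : 0 ≤ u) (hv : 0 ≤ v) :
    k * u * v ≤ (1 - 1 / p) * (u ^ s * v ^ s) + 1 / (2 * p) * (k ^ p * u ^ s)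
      + 1 / (2 * p) * (k ^ p * v ^ s) := by
  have hp0 : 0 < p := by linarith
  have hus := Real.rpow_nonneg hu s
  have hvs := Real.rpow_nonneg hv s
  have hkp := Real.rpow_nonneg hk p
  have h1 : 0 ≤ 1 - 1 / p := by
    rw [sub_nonneg, div_le_one hp0]; exact hp
  have h2 : 0 ≤ 1 / (2 * p) := by positivity
  have hsum : 1 - 1 / p + 1 / (2 * p) + 1 / (2 * p) = 1 := by field_simp; ring
  refine le_trans (le_of_eq ?_) (Real.geom_mean_le_arith_mean3_weighted h1 h2 h2
    (mul_nonneg hus hvs) (mul_nonneg hkp hus) (mul_nonneg hkp hvs) hsum)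
  have key : ∀ w : ℝ, 0 ≤ w → (w ^ s) ^ (1 - 1 / p) * (w ^ s) ^ (1 / (2 * p)) = w := by
    intro w hw
    have h3 : s * (1 - 1 / p) + s * (1 / (2 * p)) = 1 := by
      have : (1 - 1 / p) + 1 / (2 * p) = 1 / s := by rw [hps]; field_simp; ring
      rw [← mul_add, this]; field_simp
    rw [← Real.rpow_mul hw, ← Real.rpow_mul hw,
      ← Real.rpow_add_of_nonneg hw (by positivity) (by positivity), h3, Real.rpow_one]
  have key2 : (k ^ p) ^ (1 / (2 * p)) * (k ^ p) ^ (1 / (2 * p)) = k := by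
    rw [← Real.rpow_mul hk, ← Real.rpow_add_of_nonneg hk (by positivity) (by positivity)]
    rw [show p * (1 / (2 * p)) + p * (1 / (2 * p)) = 1 by field_simp; norm_num, Real.rpow_one]
  rw [Real.mul_rpow hus hvs, Real.mul_rpow hkp hus, Real.mul_rpow hkp hvs]
  calc k * u * v = ((k ^ p) ^ (1 / (2 * p)) * (k ^ p) ^ (1 / (2 * p)))
        * ((u ^ s) ^ (1 - 1 / p) * (u ^ s) ^ (1 / (2 * p)))
        * ((v ^ s) ^ (1 - 1 / p) * (v ^ s) ^ (1 / (2 * p))) := by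
        rw [key2, key u hu, key v hv]
    _ = _ := by ring

/-- Young's convolution inequality in bilinear form. -/
theorem norm_convForm_le_young {κ : ℤ → ℂ} {p s A : ℝ} (hp : 1 ≤ p) (hs : 0 < s)
    (hps : 1 / s = 1 - 1 / (2 * p)) (hA : 0 < A)
    (hκ : ∀ T : Finset ℤ, ∑ n ∈ T, ‖κ n‖ ^ p ≤ A ^ p) (E : Finset ℤ) (f g : ℤ → ℂ) :
    ‖convForm κ E f g‖ ≤ A * windowNorm s E f * windowNorm s E g := by
  have hp0 : 0 < p := by linarith
  rcases (windowNorm_nonneg s E f).eq_or_lt with hF | hF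
  · have : convForm κ E f g = 0 := by
      refine Finset.sum_eq_zero fun a ha => Finset.sum_eq_zero fun x _ => ?_
      rw [norm_eq_zero_of_windowNorm_eq_zero hs hF.symm ha]; ring
    rw [this, ← hF]; simp
  rcases (windowNorm_nonneg s E g).eq_or_lt with hG | hG
  · have : convForm κ E f g = 0 := by
      refine Finset.sum_eq_zero fun a _ => Finset.sum_eq_zero fun x hx => ?_
      rw [norm_eq_zero_of_windowNorm_eq_zero hs hG.symm hx]; ring
    rw [this, ← hG]; simp
  set F := windowNorm s E f with hFdef
  set G := windowNorm s E g with hGdef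
  have hu : ∑ a ∈ E, (‖f a‖ / F) ^ s = 1 := by
    simp_rw [Real.div_rpow (norm_nonneg _) hF.le]
    rw [← Finset.sum_div, hFdef, windowNorm_rpow hs, ← windowNorm_rpow hs]
    exact div_self (Real.rpow_pos_of_pos hF s).ne'
  have hv : ∑ a ∈ E, (‖g a‖ / G) ^ s = 1 := by
    simp_rw [Real.div_rpow (norm_nonneg _) hG.le]
    rw [← Finset.sum_div, hGdef, windowNorm_rpow hs, ← windowNorm_rpow hs]
    exact div_self (Real.rpow_pos_of_pos hG s).ne'
  have hκ' : ∀ T : Finset ℤ, ∑ n ∈ T, (‖κ n‖ / A) ^ p ≤ 1 := by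
    intro T
    simp_rw [Real.div_rpow (norm_nonneg _) hA.le]
    rw [← Finset.sum_div, div_le_one (Real.rpow_pos_of_pos hA p)]
    exact hκ T
  have hk1 : ∀ a : ℤ, ∑ x ∈ E, (‖κ (x - a)‖ / A) ^ p ≤ 1 := by
    intro a
    have := hκ' (E.image fun x => x - a)
    rwa [Finset.sum_image (by intro x _ y _ h; simpa using h)] at this
  have hk2 : ∀ x : ℤ, ∑ a ∈ E, (‖κ (x - a)‖ / A) ^ p ≤ 1 := by
    intro x
    have := hκ' (E.image fun a => x - a)
    rwa [Finset.sum_image (by intro x _ y _ h; simpa using h)] at this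
  have hw1 : 0 ≤ 1 - 1 / p := by
    rw [sub_nonneg, div_le_one hp0]; exact hp
  have main : ∑ a ∈ E, ∑ x ∈ E, ‖κ (x - a)‖ / A * (‖f a‖ / F) * (‖g x‖ / G) ≤ 1 := by
    calc _ ≤ ∑ a ∈ E, ∑ x ∈ E, ((1 - 1 / p) * ((‖f a‖ / F) ^ s * (‖g x‖ / G) ^ s)
          + 1 / (2 * p) * ((‖κ (x - a)‖ / A) ^ p * (‖f a‖ / F) ^ s)
          + 1 / (2 * p) * ((‖κ (x - a)‖ / A) ^ p * (‖g x‖ / G) ^ s)) := by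
          gcongr with a _ x _
          exact young_pointwise hp hs hps (by positivity) (by positivity) (by positivity)
      _ = (1 - 1 / p) * ((∑ a ∈ E, (‖f a‖ / F) ^ s) * ∑ x ∈ E, (‖g x‖ / G) ^ s)
          + 1 / (2 * p) * (∑ a ∈ E, (∑ x ∈ E, (‖κ (x - a)‖ / A) ^ p) * (‖f a‖ / F) ^ s)
          + 1 / (2 * p) * (∑ x ∈ E, (∑ a ∈ E, (‖κ (x - a)‖ / A) ^ p) * (‖g x‖ / G) ^ s) := by
          simp_rw [Finset.sum_add_distrib, ← Finset.mul_sum, Finset.sum_mul_sum, Finset.sum_mul]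
          rw [Finset.sum_comm (f := fun a x => (‖κ (x - a)‖ / A) ^ p * (‖g x‖ / G) ^ s)]
          simp_rw [← Finset.mul_sum]
      _ ≤ (1 - 1 / p) * (1 * 1)
          + 1 / (2 * p) * (∑ a ∈ E, 1 * (‖f a‖ / F) ^ s)
          + 1 / (2 * p) * (∑ x ∈ E, 1 * (‖g x‖ / G) ^ s) := by
          rw [hu, hv]
          gcongr with a _ x _
          · exact hk1 a
          · exact hk2 x
      _ = 1 := by
          simp_rw [one_mul]
          rw [hu, hv]; field_simp; ring
  calc ‖convForm κ E f g‖ ≤ ∑ a ∈ E, ∑ x ∈ E, ‖κ (x - a)‖ * ‖f a‖ * ‖g x‖ := by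
        refine (norm_sum_le _ _).trans (Finset.sum_le_sum fun a _ => (norm_sum_le _ _).trans
          (Finset.sum_le_sum fun x _ => ?_))
        rw [norm_mul, norm_mul]
    _ = (∑ a ∈ E, ∑ x ∈ E, ‖κ (x - a)‖ / A * (‖f a‖ / F) * (‖g x‖ / G)) * (A * F * G) := by
        simp_rw [Finset.sum_mul]
        refine Finset.sum_congr rfl fun a _ => Finset.sum_congr rfl fun x _ => ?_
        field_simp
    _ ≤ 1 * (A * F * G) := by gcongr
    _ = A * F * G := one_mul _

lemma norm_ofReal_cpow {x : ℝ} (hx : 0 ≤ x) {w : ℂ} (hw : 0 < w.re) :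
    ‖(x : ℂ) ^ w‖ = x ^ w.re :=
  Complex.norm_cpow_eq_rpow_re_of_nonneg hx hw.ne'

/-- Complex interpolation for convolution forms between `ℓ^s × ℓ^s` and `ℓ² × ℓ²`. -/
theorem norm_convForm_le_interp {κ : ℤ → ℂ} {E : Finset ℤ} {s r t A B : ℝ} (hs : 0 < s)
    (hr : 0 < r) (ht0 : 0 ≤ t) (ht1 : t ≤ 1) (hrt : 1 / r = (1 - t) / s + t / 2)
    (hA : 0 ≤ A) (hB : 0 ≤ B)
    (h0 : ∀ f g : ℤ → ℂ, ‖convForm κ E f g‖ ≤ A * windowNorm s E f * windowNorm s E g)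
    (h1 : ∀ f g : ℤ → ℂ, ‖convForm κ E f g‖ ≤ B * windowNorm 2 E f * windowNorm 2 E g)
    {f g : ℤ → ℝ} (hf : ∀ x, 0 ≤ f x) (hg : ∀ x, 0 ≤ g x) :
    ‖convForm κ E (fun x => f x) (fun x => g x)‖ ≤
      A ^ (1 - t) * B ^ t * windowNorm r E (fun x => f x) * windowNorm r E (fun x => g x) := by
  set e : ℂ → ℂ := fun z => r * ((1 - z) / s + z / 2) with he
  have here : ∀ z, (e z).re = r * ((1 - z.re) / s + z.re / 2) := by
    intro z
    have : e z = ((r : ℝ) : ℂ) * ((1 - z) / ((s : ℝ) : ℂ) + z / ((2 : ℝ) : ℂ)) := by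
      simp [he]
    rw [this, Complex.re_ofReal_mul, Complex.add_re, Complex.div_ofReal_re, Complex.div_ofReal_re]
    simp
  have hepos : ∀ z : ℂ, 0 ≤ z.re → z.re ≤ 1 → 0 < (e z).re := by
    intro z hz0 hz1
    rw [here]
    apply mul_pos hr
    rcases hz0.eq_or_lt with h | h
    · rw [← h]; simp; exact hs
    · have : 0 ≤ (1 - z.re) / s := div_nonneg (by linarith) hs.le
      linarith
  have hele : ∀ z : ℂ, 0 ≤ z.re → z.re ≤ 1 → (e z).re ≤ r * (1 / s + 1 / 2) := by
    intro z hz0 hz1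
    rw [here]
    gcongr
    linarith
  set Φ : ℂ → ℂ := fun z =>
    convForm κ E (fun x => (f x : ℂ) ^ (e z)) (fun x => (g x : ℂ) ^ (e z)) with hΦ
  have hcpow : ∀ (h : ℤ → ℝ), (∀ x, 0 ≤ h x) → ∀ z : ℂ, 0 ≤ z.re → z.re ≤ 1 → ∀ x,
      ‖(h x : ℂ) ^ (e z)‖ = h x ^ (e z).re := by
    intro h hh z hz0 hz1 x
    exact norm_ofReal_cpow (hh x) (hepos z hz0 hz1)
  have hediff : Differentiable ℂ e := by
    intro z; simp only [he]; fun_prop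
  have hdiff : ∀ z : ℂ, 0 ≤ z.re → z.re ≤ 1 → DifferentiableAt ℂ Φ z := by
    intro z hz0 hz1
    have hne : e z ≠ 0 := by
      intro h
      have := hepos z hz0 hz1
      rw [h] at this; simp at this
    simp only [hΦ, convForm]
    refine DifferentiableAt.fun_sum fun a _ => DifferentiableAt.fun_sum fun x _ => ?_
    exact ((differentiableAt_const _).mul ((hediff z).const_cpow (Or.inr hne))).mul
      ((hediff z).const_cpow (Or.inr hne))
  have hstrip : ∀ z ∈ Complex.HadamardThreeLines.verticalClosedStrip 0 1,
      0 ≤ z.re ∧ z.re ≤ 1 := fun z hz => hz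
  have hDCC : DiffContOnCl ℂ Φ (Complex.HadamardThreeLines.verticalStrip 0 1) := by
    constructor
    · intro z hz
      have hz' : 0 < z.re ∧ z.re < 1 := hz
      exact (hdiff z hz'.1.le hz'.2.le).differentiableWithinAt
    · rw [Complex.HadamardThreeLines.verticalStrip, Complex.closure_preimage_re, closure_Ioo zero_ne_one]
      intro z hz
      exact (hdiff z hz.1 hz.2).continuousAt.continuousWithinAt
  have hbdd : BddAbove ((norm ∘ Φ) '' Complex.HadamardThreeLines.verticalClosedStrip 0 1) := by
    refine ⟨∑ a ∈ E, ∑ x ∈ E, ‖κ (x - a)‖ * (max 1 (f a)) ^ (r * (1 / s + 1 / 2))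
      * (max 1 (g x)) ^ (r * (1 / s + 1 / 2)), ?_⟩
    rintro _ ⟨z, hz, rfl⟩
    obtain ⟨hz0, hz1⟩ := hstrip z hz
    have hb : ∀ (h : ℤ → ℝ), (∀ x, 0 ≤ h x) → ∀ x,
        ‖(h x : ℂ) ^ (e z)‖ ≤ (max 1 (h x)) ^ (r * (1 / s + 1 / 2)) := by
      intro h hh x
      rw [hcpow h hh z hz0 hz1]
      calc h x ^ (e z).re ≤ (max 1 (h x)) ^ (e z).re :=
            Real.rpow_le_rpow (hh x) (le_max_right _ _) (hepos z hz0 hz1).le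
        _ ≤ _ := Real.rpow_le_rpow_of_exponent_le (le_max_left _ _) (hele z hz0 hz1)
    refine (norm_sum_le _ _).trans (Finset.sum_le_sum fun a _ => (norm_sum_le _ _).trans
          (Finset.sum_le_sum fun x _ => ?_))
    rw [norm_mul, norm_mul]
    gcongr
    · exact hb f hf a
    · exact hb g hg x
  have hsumnn : ∀ (h : ℤ → ℝ), (∀ x, 0 ≤ h x) → 0 ≤ ∑ a ∈ E, h a ^ r := fun h hh =>
    Finset.sum_nonneg fun _ _ => Real.rpow_nonneg (hh _) _
  have hn : ∀ (h : ℤ → ℝ), (∀ x, 0 ≤ h x) → ∀ z : ℂ, 0 ≤ z.re → z.re ≤ 1 → ∀ q : ℝ,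
      (e z).re * q = r →
      windowNorm q E (fun x => (h x : ℂ) ^ (e z)) = (∑ a ∈ E, h a ^ r) ^ (1 / q) := by
    intro h hh z hz0 hz1 q hq
    rw [windowNorm]
    congr 1
    refine Finset.sum_congr rfl fun a _ => ?_
    rw [hcpow h hh z hz0 hz1, ← Real.rpow_mul (hh a), hq]
  have key := Complex.HadamardThreeLines.norm_le_interp_of_mem_verticalClosedStrip₀₁' Φ
    (z := (t : ℂ)) (a := A * (∑ a ∈ E, f a ^ r) ^ (1 / s) * (∑ a ∈ E, g a ^ r) ^ (1 / s))
    (b := B * (∑ a ∈ E, f a ^ r) ^ (1 / (2 : ℝ)) * (∑ a ∈ E, g a ^ r) ^ (1 / (2 : ℝ)))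
    (by constructor <;> simp [ht0, ht1]) hDCC hbdd
    (by
      intro z hz
      have hz : z.re = 0 := hz
      have hq : (e z).re * s = r := by rw [here, hz]; field_simp; ring
      refine (h0 _ _).trans (le_of_eq ?_)
      rw [hn f hf z hz.ge (by linarith) s hq, hn g hg z hz.ge (by linarith) s hq])
    (by
      intro z hz
      have hz : z.re = 1 := hz
      have hq : (e z).re * 2 = r := by rw [here, hz]; field_simp; ring
      refine (h1 _ _).trans (le_of_eq ?_)
      rw [hn f hf z (by linarith) hz.le 2 hq, hn g hg z (by linarith) hz.le 2 hq])
  have het : e t = 1 := by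
    have : e t = ((r * ((1 - t) / s + t / 2) : ℝ) : ℂ) := by simp [he]
    rw [this, ← hrt]; simp [hr.ne']
  have hΦt : Φ t = convForm κ E (fun x => f x) (fun x => g x) := by
    simp only [hΦ, het, Complex.cpow_one]
  rw [hΦt, Complex.ofReal_re] at key
  refine key.trans (le_of_eq ?_)
  have hw : ∀ (h : ℤ → ℝ), (∀ x, 0 ≤ h x) → windowNorm r E (fun x => (h x : ℂ)) =
      ((∑ a ∈ E, h a ^ r) ^ (1 / s)) ^ (1 - t) * ((∑ a ∈ E, h a ^ r) ^ (1 / (2 : ℝ))) ^ t := by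
    intro h hh
    rw [← Real.rpow_mul (hsumnn h hh), ← Real.rpow_mul (hsumnn h hh),
      ← Real.rpow_add_of_nonneg (hsumnn h hh) (mul_nonneg (by positivity) (by linarith))
        (by positivity), windowNorm, hrt]
    congr 1
    · refine Finset.sum_congr rfl fun a _ => ?_
      rw [Complex.norm_real, Real.norm_of_nonneg (hh a)]
    · ring
  rw [hw f hf, hw g hg]
  have p1 := Real.rpow_nonneg (hsumnn f hf) (1 / s)
  have p2 := Real.rpow_nonneg (hsumnn g hg) (1 / s)
  have p3 := Real.rpow_nonneg (hsumnn f hf) (1 / (2 : ℝ))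
  have p4 := Real.rpow_nonneg (hsumnn g hg) (1 / (2 : ℝ))
  rw [Real.mul_rpow (mul_nonneg hA p1) p2, Real.mul_rpow hA p1,
    Real.mul_rpow (mul_nonneg hB p3) p4, Real.mul_rpow hB p3]
  ring

lemma IsPrimitiveRoot.sum_range_zpow {ζ : ℂ} {L : ℕ} (hζ : IsPrimitiveRoot ζ L) (k : ℤ) : ∑ j ∈ Finset.range L, (ζ ^ j) ^ k = if (L : ℤ) ∣ k then (L : ℂ) else 0 := by
  have h1 : ∀ j : ℕ, (ζ ^ j) ^ k = (ζ ^ k) ^ j := by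
    intro j
    rw [← zpow_natCast ζ j, ← zpow_natCast (ζ ^ k) j, ← zpow_mul, ← zpow_mul, mul_comm]
  simp_rw [h1]
  split_ifs with h
  · rw [(hζ.zpow_eq_one_iff_dvd k).2 h]; simp
  · have hne : ζ ^ k ≠ 1 := fun h' => h ((hζ.zpow_eq_one_iff_dvd k).1 h')
    have h2 := geom_sum_mul (ζ ^ k) L
    have h3 : (ζ ^ k) ^ L = 1 := by
      rw [← h1, hζ.pow_eq_one, one_zpow]
    rw [h3, sub_self] at h2
    exact (mul_eq_zero.1 h2).resolve_right (sub_ne_zero.2 hne)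

/-- Plancherel on the group of `L`-th roots of unity, for functions on a short window. -/
lemma IsPrimitiveRoot.sum_norm_sq_trigPoly {ζ : ℂ} {L : ℕ} (hζ : IsPrimitiveRoot ζ L) (hL : 0 < L)
    {E : Finset ℤ} (hE : ∀ a ∈ E, ∀ b ∈ E, |a - b| < L) (f : ℤ → ℂ) :
    ∑ j ∈ Finset.range L, ‖∑ a ∈ E, f a * (ζ ^ j) ^ a‖ ^ 2 = L * ∑ a ∈ E, ‖f a‖ ^ 2 := by
  have hnorm : ‖ζ‖ = 1 := hζ.norm'_eq_one hL.ne'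
  have hconj : ∀ (j : ℕ) (a : ℤ), (starRingEnd ℂ) ((ζ ^ j) ^ a) = (ζ ^ j) ^ (-a) := by
    intro j a
    rw [zpow_neg, Complex.inv_def, Complex.normSq_eq_norm_sq]
    simp [hnorm]
  have : (((∑ j ∈ Finset.range L, ‖∑ a ∈ E, f a * (ζ ^ j) ^ a‖ ^ 2 : ℝ)) : ℂ)
      = ((L * ∑ a ∈ E, ‖f a‖ ^ 2 : ℝ) : ℂ) := by
    push_cast
    simp_rw [← Complex.mul_conj', map_sum, Finset.sum_mul_sum, map_mul, hconj]
    rw [Finset.sum_comm, Finset.mul_sum]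
    refine Finset.sum_congr rfl fun a ha => ?_
    rw [Finset.sum_comm]
    have hz : ∀ (j : ℕ), ζ ^ j ≠ 0 := fun j => pow_ne_zero _ (hζ.ne_zero hL.ne')
    have : ∀ b ∈ E, (∑ j ∈ Finset.range L,
        f a * (ζ ^ j) ^ a * ((starRingEnd ℂ) (f b) * (ζ ^ j) ^ (-b))) =
        if a = b then (L : ℂ) * (f a * (starRingEnd ℂ) (f b)) else 0 := by
      intro b hb
      calc _ = f a * (starRingEnd ℂ) (f b) * ∑ j ∈ Finset.range L, (ζ ^ j) ^ (a - b) := by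
            rw [Finset.mul_sum]
            refine Finset.sum_congr rfl fun j _ => ?_
            rw [sub_eq_add_neg, zpow_add₀ (hz j)]; ring
        _ = _ := by
            rw [hζ.sum_range_zpow]
            by_cases hab : a = b
            · simp [hab]; ring
            · have : ¬ ((L : ℤ) ∣ a - b) := fun h => by
                have := Int.eq_zero_of_abs_lt_dvd h (hE a ha b hb)
                omega
              simp [hab, this]
    rw [Finset.sum_congr rfl this, Finset.sum_ite_eq]
    simp [ha]
  exact_mod_cast this

lemma windowNorm_two (E : Finset ℤ) (f : ℤ → ℂ) :
    windowNorm 2 E f = √(∑ a ∈ E, ‖f a‖ ^ 2) := by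
  rw [windowNorm, Real.sqrt_eq_rpow]
  simp

/-- A convolution form is bounded on `ℓ²` by the supremum of the Fourier transform of the kernel. -/
theorem norm_convForm_le_fourier {κ : ℤ → ℂ} {S : Finset ℤ} {B : ℝ} (hS : ∀ n ∉ S, κ n = 0)
    (hB : ∀ u : ℂ, ‖u‖ = 1 → ‖∑ n ∈ S, κ n * u ^ n‖ ≤ B) (E : Finset ℤ) (f g : ℤ → ℂ) :
    ‖convForm κ E f g‖ ≤ B * windowNorm 2 E f * windowNorm 2 E g := by
  obtain ⟨L, hL, hE, hSE⟩ : ∃ L : ℕ, 0 < L ∧ (∀ a ∈ E, ∀ b ∈ E, |a - b| < L) ∧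
      (∀ n ∈ S, ∀ a ∈ E, ∀ x ∈ E, |n + a - x| < L) := by
    refine ⟨∑ n ∈ S, n.natAbs + 2 * ∑ a ∈ E, a.natAbs + 1, by positivity, ?_, ?_⟩
    · intro a ha b hb
      have h1 := Finset.single_le_sum (f := fun a : ℤ => a.natAbs) (fun _ _ => Nat.zero_le _) ha
      have h2 := Finset.single_le_sum (f := fun a : ℤ => a.natAbs) (fun _ _ => Nat.zero_le _) hb
      rw [abs_lt]
      omega
    · intro n hn a ha b hb
      have h1 := Finset.single_le_sum (f := fun a : ℤ => a.natAbs) (fun _ _ => Nat.zero_le _) ha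
      have h2 := Finset.single_le_sum (f := fun a : ℤ => a.natAbs) (fun _ _ => Nat.zero_le _) hb
      have h3 := Finset.single_le_sum (f := fun a : ℤ => a.natAbs) (fun _ _ => Nat.zero_le _) hn
      rw [abs_lt]
      omega
  obtain ⟨ζ, hζ⟩ : ∃ ζ : ℂ, IsPrimitiveRoot ζ L := ⟨_, Complex.isPrimitiveRoot_exp L hL.ne'⟩
  have hnorm : ‖ζ‖ = 1 := hζ.norm'_eq_one hL.ne'
  have hz : ∀ (j : ℕ), ζ ^ j ≠ 0 := fun j => pow_ne_zero _ (hζ.ne_zero hL.ne')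
  have hid : (L : ℂ) * convForm κ E f g = ∑ j ∈ Finset.range L,
      (∑ n ∈ S, κ n * (ζ ^ j) ^ n) * (∑ a ∈ E, f a * (ζ ^ j) ^ a) *
        (∑ x ∈ E, g x * (ζ ^ j) ^ (-x)) := by
    simp_rw [Finset.sum_mul_sum, Finset.sum_mul]
    rw [Finset.sum_comm, convForm]
    simp_rw [Finset.mul_sum]
    have e1 : ∀ n ∈ S, (∑ j ∈ Finset.range L, ∑ x ∈ E, ∑ a ∈ E,
        κ n * (ζ ^ j) ^ n * (f a * (ζ ^ j) ^ a) * (g x * (ζ ^ j) ^ (-x))) =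
        ∑ a ∈ E, ∑ x ∈ E, if n = x - a then (L : ℂ) * (κ n * f a * g x) else 0 := by
      intro n hn
      rw [Finset.sum_comm, Finset.sum_comm (s := E) (t := E)]
      refine Finset.sum_congr rfl fun x hx => ?_
      rw [Finset.sum_comm]
      refine Finset.sum_congr rfl fun a ha => ?_
      calc _ = κ n * f a * g x * ∑ j ∈ Finset.range L, (ζ ^ j) ^ (n + a - x) := by
            rw [Finset.mul_sum]
            refine Finset.sum_congr rfl fun j _ => ?_
            rw [sub_eq_add_neg, zpow_add₀ (hz j), zpow_add₀ (hz j)]; ring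
        _ = _ := by
            rw [hζ.sum_range_zpow]
            by_cases hab : n = x - a
            · simp [hab]; ring
            · have : ¬ ((L : ℤ) ∣ n + a - x) := fun h => by
                have := Int.eq_zero_of_abs_lt_dvd h (hSE n hn a ha x hx)
                omega
              simp [hab, this]
    rw [Finset.sum_congr rfl e1, Finset.sum_comm (s := S)]
    refine Finset.sum_congr rfl fun a _ => ?_
    rw [Finset.sum_comm (s := S)]
    refine Finset.sum_congr rfl fun x _ => ?_
    rw [Finset.sum_ite_eq']
    split_ifs with h
    · rfl
    · rw [hS _ h]; ring
  have hB0 : 0 ≤ B := (norm_nonneg _).trans (hB 1 (by simp))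
  have hg : ∑ j ∈ Finset.range L, ‖∑ x ∈ E, g x * (ζ ^ j) ^ (-x)‖ ^ 2
      = L * ∑ a ∈ E, ‖g a‖ ^ 2 := by
    have := hζ.inv.sum_norm_sq_trigPoly hL hE g
    simpa [inv_pow] using this
  have key : L * ‖convForm κ E f g‖ ≤ L * (B * windowNorm 2 E f * windowNorm 2 E g) := by
    calc L * ‖convForm κ E f g‖ = ‖(L : ℂ) * convForm κ E f g‖ := by simp
      _ ≤ ∑ j ∈ Finset.range L, B * (‖∑ a ∈ E, f a * (ζ ^ j) ^ a‖ *
        ‖∑ x ∈ E, g x * (ζ ^ j) ^ (-x)‖) := by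
          rw [hid]
          refine (norm_sum_le _ _).trans (Finset.sum_le_sum fun j _ => ?_)
          rw [norm_mul, norm_mul, mul_assoc]
          gcongr
          exact hB _ (by simp [hnorm])
      _ ≤ B * (√(L * ∑ a ∈ E, ‖f a‖ ^ 2) * √(L * ∑ a ∈ E, ‖g a‖ ^ 2)) := by
          rw [← Finset.mul_sum, ← hζ.sum_norm_sq_trigPoly hL hE f, ← hg]
          gcongr
          exact Real.sum_mul_le_sqrt_mul_sqrt _ _ _
      _ = _ := by
          rw [windowNorm_two, windowNorm_two, Real.sqrt_mul (by positivity),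
            Real.sqrt_mul (by positivity)]
          have := Real.mul_self_sqrt (show (0 : ℝ) ≤ L by positivity)
          linear_combination (B * √(∑ a ∈ E, ‖f a‖ ^ 2) * √(∑ a ∈ E, ‖g a‖ ^ 2)) * this
  exact le_of_mul_le_mul_left key (by exact_mod_cast hL)

lemma lpNorm_eq_ofReal_windowNorm {p : ℝ} (hp : 0 < p) {E : Finset ℤ} {g : ℤ → ℝ}
    (hg : ∀ x ∉ E, g x = 0) :
    lpNorm p g = ENNReal.ofReal (windowNorm p E fun x => (g x : ℂ)) := by
  have hnn : ∀ x, 0 ≤ ‖g x‖ ^ p := fun x => Real.rpow_nonneg (norm_nonneg _) _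
  rw [lpNorm, windowNorm, tsum_eq_sum (s := E), ← ENNReal.ofReal_rpow_of_nonneg _ (by positivity)]
  · rw [ENNReal.ofReal_sum_of_nonneg]
    · congr 1
      refine Finset.sum_congr rfl fun x _ => ?_
      rw [Complex.norm_real, ← ENNReal.ofReal_rpow_of_nonneg (norm_nonneg _) hp.le,
        ofReal_norm, enorm_eq_nnnorm]
    · intro x _
      rw [Complex.norm_real]; exact hnn x
  · exact Finset.sum_nonneg fun x _ => by rw [Complex.norm_real]; exact hnn x
  · intro x hx
    simp [hg x hx, hp]

/-- The nonnegative kernel of the averaging operator `pavg N y b`. -/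
def primeKernel (N y : ℕ) (b : ℤ) (m : ℤ) : ℝ :=
  ∑ n ∈ (Finset.range N).filter (fun n : ℕ => (n : ℤ) % (y : ℤ) = b % (y : ℤ)),
    if (n : ℤ) = m then (Nat.totient y : ℝ) / (N : ℝ) * ArithmeticFunction.vonMangoldt n else 0

lemma primeKernel_nonneg (N y : ℕ) (b m : ℤ) : 0 ≤ primeKernel N y b m := by
  refine Finset.sum_nonneg fun n _ => ?_
  split_ifs
  · have := ArithmeticFunction.vonMangoldt_nonneg (n := n)
    positivity
  · exact le_rfl

lemma pavg_eq_sum_primeKernel (N y : ℕ) (b : ℤ) {f : ℤ → ℝ} {E : Finset ℤ}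
    (hf : ∀ a ∉ E, f a = 0) (x : ℤ) :
    pavg N y b f x = ∑ a ∈ E, primeKernel N y b (x - a) * f a := by
  simp_rw [pavg, primeKernel, Finset.sum_mul, Finset.mul_sum]
  rw [Finset.sum_comm]
  refine Finset.sum_congr rfl fun n _ => ?_
  have : ∀ a ∈ E, (if (n : ℤ) = x - a then
      (Nat.totient y : ℝ) / (N : ℝ) * ArithmeticFunction.vonMangoldt n else 0) * f a =
      if x - n = a then (Nat.totient y : ℝ) / (N : ℝ) *
        (ArithmeticFunction.vonMangoldt n * f a) else 0 := by
    intro a _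
    by_cases h : (n : ℤ) = x - a
    · rw [if_pos h, if_pos (by omega)]; ring
    · rw [if_neg h, if_neg (by omega)]; ring
  rw [Finset.sum_congr rfl this, Finset.sum_ite_eq]
  split_ifs with h
  · rfl
  · rw [hf _ h]; ring

/-- A bilinear estimate for the kernel gives the `ℓ^r → ℓ^{r'}` estimate for the average. -/
theorem lpNorm_pavg_le_of_bilinear {r D : ℝ} (hr : 1 < r) (hD : 0 ≤ D) {N y : ℕ} {b : ℤ}
    (H : ∀ (E : Finset ℤ) (f g : ℤ → ℝ), (∀ x, 0 ≤ f x) → (∀ x, 0 ≤ g x) →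
      ∑ a ∈ E, ∑ x ∈ E, primeKernel N y b (x - a) * f a * g x ≤
        D * windowNorm r E (fun x => f x) * windowNorm r E (fun x => g x))
    {f : ℤ → ℝ} (hf : (Function.support f).Finite) :
    lpNorm (r / (r - 1)) (pavg N y b f) ≤ ENNReal.ofReal D * lpNorm r f := by
  have hr0 : 0 < r := by linarith
  have hr1 : 0 < r - 1 := by linarith
  set q := r / (r - 1) with hq
  have hq0 : 0 < q := by positivity
  classical
  set E : Finset ℤ := hf.toFinset ∪
    (hf.toFinset ×ˢ Finset.range N).image (fun z => z.1 + (z.2 : ℤ)) with hE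
  have hfE : ∀ x ∉ E, f x = 0 := by
    intro x hx
    by_contra h
    exact hx (Finset.mem_union_left _ (hf.mem_toFinset.2 h))
  set h := pavg N y b f with hh
  have hhE : ∀ x ∉ E, h x = 0 := by
    intro x hx
    rw [hh, pavg]
    refine mul_eq_zero_of_right _ (Finset.sum_eq_zero fun n hn => ?_)
    have : f (x - n) = 0 := by
      by_contra hne
      refine hx (Finset.mem_union_right _ (Finset.mem_image.2 ⟨(x - n, n), ?_, by simp⟩))
      rw [Finset.mem_product]
      exact ⟨hf.mem_toFinset.2 hne, (Finset.mem_filter.1 hn).1⟩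
    rw [this, mul_zero]
  rw [lpNorm_eq_ofReal_windowNorm hq0 hhE, lpNorm_eq_ofReal_windowNorm hr0 hfE,
    ← ENNReal.ofReal_mul hD]
  refine ENNReal.ofReal_le_ofReal ?_
  set Sm := ∑ x ∈ E, |h x| ^ q with hSm
  have hSm0 : 0 ≤ Sm := Finset.sum_nonneg fun _ _ => Real.rpow_nonneg (abs_nonneg _) _
  have hW : windowNorm q E (fun x => (h x : ℂ)) = Sm ^ (1 / q) := by
    simp [windowNorm, hSm]
  have hWg : windowNorm r E (fun x => ((|h x| ^ (q - 1) : ℝ) : ℂ)) = Sm ^ (1 / r) := by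
    rw [windowNorm, hSm]
    congr 1
    refine Finset.sum_congr rfl fun x _ => ?_
    rw [Complex.norm_real, Real.norm_of_nonneg (Real.rpow_nonneg (abs_nonneg _) _),
      ← Real.rpow_mul (abs_nonneg _)]
    congr 1
    rw [hq]; field_simp; ring
  have hWf : windowNorm r E (fun x => ((|f x| : ℝ) : ℂ)) = windowNorm r E (fun x => (f x : ℂ)) := by
    simp [windowNorm]
  have hle : Sm ≤ D * windowNorm r E (fun x => (f x : ℂ)) * Sm ^ (1 / r) := by
    have := H E (fun x => |f x|) (fun x => |h x| ^ (q - 1)) (fun _ => abs_nonneg _)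
      (fun _ => Real.rpow_nonneg (abs_nonneg _) _)
    rw [hWg, hWf] at this
    refine le_trans ?_ this
    rw [Finset.sum_comm]
    refine Finset.sum_le_sum fun x _ => ?_
    rw [← Finset.sum_mul]
    have h1 : |h x| ≤ ∑ a ∈ E, primeKernel N y b (x - a) * |f a| := by
      rw [hh, pavg_eq_sum_primeKernel N y b hfE x]
      refine (Finset.abs_sum_le_sum_abs _ _).trans (le_of_eq ?_)
      refine Finset.sum_congr rfl fun a _ => ?_
      rw [abs_mul, abs_of_nonneg (primeKernel_nonneg _ _ _ _)]
    have h2 : |h x| ^ q = |h x| * |h x| ^ (q - 1) := by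
      have h3 : 0 ≤ q - 1 := by
        have : q - 1 = 1 / (r - 1) := by rw [hq]; field_simp; ring
        rw [this]; positivity
      conv_rhs => lhs; rw [← Real.rpow_one |h x|]
      rw [← Real.rpow_add_of_nonneg (abs_nonneg _) zero_le_one h3]
      congr 1; ring
    rw [h2]
    exact mul_le_mul_of_nonneg_right h1 (Real.rpow_nonneg (abs_nonneg _) _)
  rw [hW]
  rcases hSm0.eq_or_lt with h0 | h0
  · rw [← h0, Real.zero_rpow (by positivity)]
    exact mul_nonneg hD (windowNorm_nonneg _ _ _)
  · have hpos := Real.rpow_pos_of_pos h0 (1 / r)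
    refine le_of_mul_le_mul_right ?_ hpos
    rw [← Real.rpow_add h0, show 1 / q + 1 / r = 1 by rw [hq]; field_simp; ring, Real.rpow_one]
    exact hle

/-- The divisor bound `τ(n) ≪_ε n^ε`. -/
theorem exists_card_divisors_le_rpow {ε : ℝ} (hε : 0 < ε) :
    ∃ C : ℝ, 1 ≤ C ∧ ∀ n : ℕ, n ≠ 0 → (n.divisors.card : ℝ) ≤ C * (n : ℝ) ^ ε := by
  have hl2 : 0 < Real.log 2 := Real.log_pos (by norm_num)
  set K : ℝ := 1 + 1 / (ε * Real.log 2) with hK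
  have hK1 : 1 ≤ K := by
    have : 0 < 1 / (ε * Real.log 2) := by positivity
    linarith
  obtain ⟨P, hP⟩ := exists_nat_ge ((2 : ℝ) ^ (1 / ε))
  have hprime : ∀ (p : ℕ), p.Prime → ∀ a : ℕ,
      ((a + 1 : ℕ) : ℝ) ≤ (if p < P then K else 1) * (p : ℝ) ^ (a * ε) := by
    intro p hp a
    have hp2 : (2 : ℝ) ≤ p := by exact_mod_cast hp.two_le
    split_ifs with h
    · have h1 : 1 + a * ε * Real.log 2 ≤ (p : ℝ) ^ (a * ε) := by
        calc 1 + a * ε * Real.log 2 ≤ Real.exp (Real.log 2 * (a * ε)) := by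
              have := Real.add_one_le_exp (Real.log 2 * (a * ε)); linarith
          _ = (2 : ℝ) ^ (a * ε) := by rw [Real.rpow_def_of_pos (by norm_num)]
          _ ≤ (p : ℝ) ^ (a * ε) := by gcongr
      calc ((a + 1 : ℕ) : ℝ) ≤ K * (1 + a * ε * Real.log 2) := by
            rw [hK]; push_cast
            have : (1 + 1 / (ε * Real.log 2)) * (1 + a * ε * Real.log 2)
              = 1 + a + (a * ε * Real.log 2 + 1 / (ε * Real.log 2)) := by field_simp; ring
            rw [this]
            have : 0 ≤ a * ε * Real.log 2 + 1 / (ε * Real.log 2) := by positivity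
            linarith
        _ ≤ _ := by gcongr
    · rw [one_mul]
      have h2 : (2 : ℝ) ≤ (p : ℝ) ^ ε := by
        calc (2 : ℝ) = ((2 : ℝ) ^ (1 / ε)) ^ ε := by
              rw [← Real.rpow_mul (by norm_num)]; field_simp; simp
          _ ≤ (p : ℝ) ^ ε := by
              gcongr
              exact hP.trans (by exact_mod_cast not_lt.1 h)
      calc ((a + 1 : ℕ) : ℝ) ≤ ((2 ^ a : ℕ) : ℝ) := by
            exact_mod_cast Nat.lt_two_pow_self
        _ = (2 : ℝ) ^ a := by push_cast; rfl
        _ ≤ ((p : ℝ) ^ ε) ^ a := by gcongr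
        _ = (p : ℝ) ^ (a * ε) := by
            rw [← Real.rpow_natCast, ← Real.rpow_mul (by positivity), mul_comm]
  refine ⟨K ^ P, one_le_pow₀ hK1, fun n hn => ?_⟩
  rw [Nat.card_divisors hn]
  push_cast
  have hnprod : (n : ℝ) ^ ε = ∏ p ∈ n.primeFactors, (p : ℝ) ^ (n.factorization p * ε) := by
    conv_lhs => rw [← Nat.prod_factorization_pow_eq_self hn]
    rw [Finsupp.prod, Nat.support_factorization]
    push_cast
    rw [← Real.finsetProd_rpow _ _ (fun i _ => by positivity)]
    refine Finset.prod_congr rfl fun p _ => ?_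
    rw [← Real.rpow_natCast, ← Real.rpow_mul (by positivity)]
  calc ∏ p ∈ n.primeFactors, ((n.factorization p : ℝ) + 1)
      ≤ ∏ p ∈ n.primeFactors, ((if p < P then K else 1) * (p : ℝ) ^ (n.factorization p * ε)) := by
        refine Finset.prod_le_prod (fun p _ => by positivity) fun p hp => ?_
        have := hprime p (Nat.prime_of_mem_primeFactors hp) (n.factorization p)
        push_cast at this
        exact this
    _ = (∏ p ∈ n.primeFactors, (if p < P then K else 1)) * (n : ℝ) ^ ε := by
        rw [Finset.prod_mul_distrib, hnprod]
    _ ≤ K ^ P * (n : ℝ) ^ ε := by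
        gcongr
        rw [Finset.prod_ite, Finset.prod_const, Finset.prod_const_one, mul_one]
        refine pow_le_pow_right₀ hK1 ?_
        calc _ ≤ (Finset.range P).card := Finset.card_le_card fun p hp => by
              simpa using (Finset.mem_filter.1 hp).2
          _ = P := Finset.card_range P

open ArithmeticFunction in
/-- The arithmetic function `d ↦ d · 1_{d ∣ n}`. -/
def dvdIndicator (n : ℕ) : ArithmeticFunction ℝ := ⟨fun d => if d ∣ n then (d : ℝ) else 0, by simp⟩

lemma dvdIndicator_apply (n d : ℕ) : dvdIndicator n d = if d ∣ n then (d : ℝ) else 0 := rfl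

lemma isMultiplicative_dvdIndicator (n : ℕ) : (dvdIndicator n).IsMultiplicative := by
  refine ⟨by simp [dvdIndicator_apply], fun {a b} hab => ?_⟩
  simp only [dvdIndicator_apply]
  have : a * b ∣ n ↔ a ∣ n ∧ b ∣ n :=
    ⟨fun h => ⟨(dvd_mul_right a b).trans h, (dvd_mul_left b a).trans h⟩,
      fun h => hab.mul_dvd_of_dvd_of_dvd h.1 h.2⟩
  by_cases ha : a ∣ n <;> by_cases hb : b ∣ n <;> simp [this, ha, hb]

/-- Ramanujan's sum `c_q(n)` as an arithmetic function of `q`. -/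
def ramanujanSum (n : ℕ) : ArithmeticFunction ℝ :=
  (ArithmeticFunction.moebius : ArithmeticFunction ℝ) * dvdIndicator n

lemma isMultiplicative_ramanujanSum (n : ℕ) : (ramanujanSum n).IsMultiplicative :=
  ArithmeticFunction.isMultiplicative_moebius.intCast.mul (isMultiplicative_dvdIndicator n)

lemma ramanujanSum_prime {p : ℕ} (hp : p.Prime) (n : ℕ) :
    ramanujanSum n p = (if p ∣ n then (p : ℝ) else 0) - 1 := by
  rw [ramanujanSum, ArithmeticFunction.mul_apply, Nat.sum_divisorsAntidiagonal'
    (f := fun a b => (ArithmeticFunction.moebius : ArithmeticFunction ℝ) a * dvdIndicator n b),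
    hp.sum_divisors]
  simp [dvdIndicator_apply, ArithmeticFunction.moebius_apply_prime hp, Nat.div_self hp.pos]
  ring

lemma ramanujanSum_of_coprime {q n : ℕ} (hq : q ≠ 0) (h : Nat.Coprime q n) :
    ramanujanSum n q = (ArithmeticFunction.moebius q : ℝ) := by
  rw [ramanujanSum, ArithmeticFunction.mul_apply, Finset.sum_eq_single (q, 1)]
  · simp [dvdIndicator_apply]
  · rintro ⟨a, b⟩ hab hne
    rw [Nat.mem_divisorsAntidiagonal] at hab
    have : ¬ b ∣ n := by
      intro hb
      have hb1 : b = 1 := Nat.eq_one_of_dvd_coprimes h ⟨a, by rw [← hab.1]; ring⟩ hb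
      apply hne
      have := hab.1
      simp only [hb1, mul_one] at this ⊢
      rw [this]
    simp [dvdIndicator_apply, this]
  · simp [hq]

lemma abs_ramanujanSum_le (q n : ℕ) :
    |ramanujanSum n q| ≤ ∑ d ∈ q.divisors, if d ∣ n then (d : ℝ) else 0 := by
  rw [ramanujanSum, ArithmeticFunction.mul_apply, Nat.sum_divisorsAntidiagonal'
    (f := fun a b => (ArithmeticFunction.moebius : ArithmeticFunction ℝ) a * dvdIndicator n b)]
  refine (Finset.abs_sum_le_sum_abs _ _).trans (Finset.sum_le_sum fun d _ => ?_)
  rw [abs_mul, dvdIndicator_apply]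
  have h1 : |((ArithmeticFunction.moebius (q / d) : ℤ) : ℝ)| ≤ 1 := by
    exact_mod_cast ArithmeticFunction.abs_moebius_le_one
  have h2 : (0 : ℝ) ≤ if d ∣ n then (d : ℝ) else 0 := by split_ifs <;> positivity
  rw [abs_of_nonneg h2]
  calc _ ≤ 1 * (if d ∣ n then (d : ℝ) else 0) := by
        gcongr
        simpa using h1
    _ = _ := one_mul _

/-- Ramanujan's sum is the power sum over the primitive roots of unity. -/
theorem ramanujanSum_eq_sum_primitiveRoots {q : ℕ} (hq : 0 < q) (n : ℕ) :
    (ramanujanSum n q : ℂ) = ∑ z ∈ primitiveRoots q ℂ, z ^ n := by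
  classical
  have h1 : ∀ m > 0, ∑ i ∈ m.divisors, (∑ z ∈ primitiveRoots i ℂ, z ^ n) =
      (if m ∣ n then (m : ℂ) else 0) := by
    intro m hm
    have : NeZero m := ⟨hm.ne'⟩
    have hζ := Complex.isPrimitiveRoot_exp m hm.ne'
    set ζ := Complex.exp (2 * Real.pi * Complex.I / m)
    rw [← Finset.sum_biUnion, ← IsPrimitiveRoot.nthRoots_one_eq_biUnion_primitiveRoots]
    · have h2 : Polynomial.nthRootsFinset m (1 : ℂ) = (Finset.range m).image (fun j => ζ ^ j) := by
        ext z
        rw [Polynomial.mem_nthRootsFinset hm, Finset.mem_image]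
        constructor
        · intro hz
          obtain ⟨i, hi, h⟩ := hζ.eq_pow_of_pow_eq_one hz
          exact ⟨i, Finset.mem_range.2 hi, h⟩
        · rintro ⟨i, _, rfl⟩
          rw [← pow_mul, mul_comm, pow_mul, hζ.pow_eq_one, one_pow]
      rw [h2, Finset.sum_image]
      · have := hζ.sum_range_zpow (n : ℤ)
        simp only [zpow_natCast, Int.natCast_dvd_natCast] at this
        exact this
      · intro i hi j hj h
        exact hζ.pow_inj (by simpa using hi) (by simpa using hj) h
    · intro i _ j _ hij
      exact IsPrimitiveRoot.disjoint hij
  have h2 := (ArithmeticFunction.sum_eq_iff_sum_mul_moebius_eq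
    (f := fun i => ∑ z ∈ primitiveRoots i ℂ, z ^ n)
    (g := fun m : ℕ => if m ∣ n then (m : ℂ) else 0)).1 h1 q hq
  rw [← h2, ramanujanSum, ArithmeticFunction.mul_apply]
  push_cast
  refine Finset.sum_congr rfl fun x _ => ?_
  rw [dvdIndicator_apply]
  split_ifs <;> simp

/-- Euler's totient as a real-valued arithmetic function. -/
def totientFun : ArithmeticFunction ℝ := ⟨fun n => (Nat.totient n : ℝ), by simp⟩

lemma totientFun_apply (n : ℕ) : totientFun n = (Nat.totient n : ℝ) := rfl

lemma isMultiplicative_totientFun : totientFun.IsMultiplicative :=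
  ⟨by simp [totientFun_apply], fun {m n} h => by
    simp [totientFun_apply, Nat.totient_mul h]⟩

/-- The multiplicative function `∏_{p ∣ n} (p - 2)`. -/
def subTwoFun : ArithmeticFunction ℝ :=
  ArithmeticFunction.prodPrimeFactors (fun p : ℕ => (p : ℝ) - 2)

lemma isMultiplicative_subTwoFun : subTwoFun.IsMultiplicative :=
  ArithmeticFunction.IsMultiplicative.prodPrimeFactors _

lemma ArithmeticFunction.IsMultiplicative.eq_prod_primeFactors_of_squarefree
    {f : ArithmeticFunction ℝ} (hf : f.IsMultiplicative) {n : ℕ} (hn : Squarefree n) :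
    f n = ∏ p ∈ n.primeFactors, f p := by
  rw [← hf.map_prod_of_subset_primeFactors n n.primeFactors (Finset.Subset.refl _),
    Nat.prod_primeFactors_of_squarefree hn]

lemma totient_eq_prod_of_squarefree {n : ℕ} (hn : Squarefree n) :
    (Nat.totient n : ℝ) = ∏ p ∈ n.primeFactors, ((p : ℝ) - 1) := by
  rw [← totientFun_apply, isMultiplicative_totientFun.eq_prod_primeFactors_of_squarefree hn]
  refine Finset.prod_congr rfl fun p hp => ?_
  have hp := Nat.prime_of_mem_primeFactors hp
  rw [totientFun_apply, Nat.totient_prime hp, Nat.cast_sub hp.one_le, Nat.cast_one]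

lemma abs_subTwoFun_le {n : ℕ} (hn : Squarefree n) : |subTwoFun n| ≤ Nat.totient n := by
  have h0 : ∀ p ∈ n.primeFactors, (0 : ℝ) ≤ (p : ℝ) - 2 := fun p hp => by
    have : (2 : ℝ) ≤ p := by exact_mod_cast (Nat.prime_of_mem_primeFactors hp).two_le
    linarith
  rw [subTwoFun, ArithmeticFunction.prodPrimeFactors_apply hn.ne_zero,
    totient_eq_prod_of_squarefree hn, abs_of_nonneg (Finset.prod_nonneg h0)]
  exact Finset.prod_le_prod h0 fun p _ => by linarith

lemma le_totient_mul_card_divisors {n : ℕ} (hn : Squarefree n) :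
    (n : ℝ) ≤ Nat.totient n * n.divisors.card := by
  have h2 : (n.divisors.card : ℝ) = ∏ p ∈ n.primeFactors, (2 : ℝ) := by
    rw [Nat.card_divisors hn.ne_zero]
    push_cast
    refine Finset.prod_congr rfl fun p hp => ?_
    rw [Nat.factorization_eq_one_of_squarefree hn (Nat.prime_of_mem_primeFactors hp)
      (Nat.dvd_of_mem_primeFactors hp)]
    norm_num
  conv_lhs => rw [← Nat.prod_primeFactors_of_squarefree hn]
  rw [h2, totient_eq_prod_of_squarefree hn, ← Finset.prod_mul_distrib]
  push_cast
  refine Finset.prod_le_prod (fun p _ => by positivity) fun p hp => ?_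
  have : (2 : ℝ) ≤ p := by exact_mod_cast (Nat.prime_of_mem_primeFactors hp).two_le
  linarith

lemma ramanujanSum_sq {g : ℕ} (hg : Squarefree g) (n : ℕ) :
    ramanujanSum n g ^ 2 =
      ∑ h ∈ g.divisors, (Nat.totient (g / h) : ℝ) * subTwoFun h * ramanujanSum n h := by
  have hc := isMultiplicative_ramanujanSum n
  have key := ArithmeticFunction.IsMultiplicative.prodPrimeFactors_add_of_squarefree
    isMultiplicative_totientFun (isMultiplicative_subTwoFun.pmul hc) hg
  rw [ArithmeticFunction.prodPrimeFactors_apply hg.ne_zero, ArithmeticFunction.mul_apply,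
    Nat.sum_divisorsAntidiagonal'
      (f := fun a b => totientFun a * (subTwoFun.pmul (ramanujanSum n)) b)] at key
  rw [hc.eq_prod_primeFactors_of_squarefree hg, ← Finset.prod_pow]
  calc _ = ∏ p ∈ g.primeFactors, (totientFun + subTwoFun.pmul (ramanujanSum n)) p := by
        refine Finset.prod_congr rfl fun p hp => ?_
        have hp := Nat.prime_of_mem_primeFactors hp
        rw [ArithmeticFunction.add_apply, ArithmeticFunction.pmul_apply, totientFun_apply,
          Nat.totient_prime hp, Nat.cast_sub hp.one_le, subTwoFun,
          ArithmeticFunction.prodPrimeFactors_apply hp.ne_zero, hp.primeFactors,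
          Finset.prod_singleton, ramanujanSum_prime hp]
        push_cast
        split_ifs <;> ring
    _ = _ := by
        rw [key]
        refine Finset.sum_congr rfl fun h _ => ?_
        rw [ArithmeticFunction.pmul_apply, totientFun_apply, mul_assoc]

/-- For squarefree moduli, write `a = m₁ / g`, `b = m₂ / g` with `g = gcd(m₁, m₂)`. -/
lemma squarefree_gcd_split {m₁ m₂ : ℕ} (h₁ : Squarefree m₁) (h₂ : Squarefree m₂) :
    ∃ a b, m₁ = m₁.gcd m₂ * a ∧ m₂ = m₁.gcd m₂ * b ∧ m₁ / m₁.gcd m₂ = a ∧ m₂ / m₁.gcd m₂ = b ∧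
      Nat.Coprime a b ∧ Nat.Coprime (m₁.gcd m₂) a ∧ Nat.Coprime (m₁.gcd m₂) b ∧
      Squarefree (m₁.gcd m₂ * a * b) := by
  have hg : 0 < m₁.gcd m₂ := Nat.gcd_pos_of_pos_left _ h₁.ne_zero.bot_lt
  have e1 : m₁ = m₁.gcd m₂ * (m₁ / m₁.gcd m₂) := (Nat.mul_div_cancel' (Nat.gcd_dvd_left _ _)).symm
  have e2 : m₂ = m₁.gcd m₂ * (m₂ / m₁.gcd m₂) := (Nat.mul_div_cancel' (Nat.gcd_dvd_right _ _)).symm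
  have c1 : Nat.Coprime (m₁.gcd m₂) (m₁ / m₁.gcd m₂) :=
    Nat.coprime_of_squarefree_mul (e1 ▸ h₁)
  have c2 : Nat.Coprime (m₁.gcd m₂) (m₂ / m₁.gcd m₂) :=
    Nat.coprime_of_squarefree_mul (e2 ▸ h₂)
  have c3 : Nat.Coprime (m₁ / m₁.gcd m₂) (m₂ / m₁.gcd m₂) := Nat.coprime_div_gcd_div_gcd hg
  refine ⟨_, _, e1, e2, rfl, rfl, c3, c1, c2, ?_⟩
  rw [Nat.squarefree_mul (c2.mul_left c3), ← e1]
  exact ⟨h₁, h₂.squarefree_of_dvd (Nat.div_dvd_of_dvd (Nat.gcd_dvd_right _ _))⟩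

lemma ramanujanSum_mul {m₁ m₂ : ℕ} (h₁ : Squarefree m₁) (h₂ : Squarefree m₂) (n : ℕ) :
    ramanujanSum n m₁ * ramanujanSum n m₂ =
      ∑ h ∈ (m₁.gcd m₂).divisors, (Nat.totient (m₁.gcd m₂ / h) : ℝ) * subTwoFun h *
        ramanujanSum n (m₁ / m₁.gcd m₂ * (m₂ / m₁.gcd m₂) * h) := by
  obtain ⟨a, b, e1, e2, d1, d2, cab, ca, cb, hsq⟩ := squarefree_gcd_split h₁ h₂
  rw [d1, d2]
  have hc := isMultiplicative_ramanujanSum n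
  have hg : Squarefree (m₁.gcd m₂) := h₁.squarefree_of_dvd (Nat.gcd_dvd_left _ _)
  generalize m₁.gcd m₂ = g at *
  subst e1 e2
  rw [hc.map_mul_of_coprime ca, hc.map_mul_of_coprime cb]
  calc _ = ramanujanSum n g ^ 2 * (ramanujanSum n a * ramanujanSum n b) := by ring
    _ = _ := by
      rw [ramanujanSum_sq hg, Finset.sum_mul]
      refine Finset.sum_congr rfl fun h hh => ?_
      have hd := Nat.dvd_of_mem_divisors hh
      rw [hc.map_mul_of_coprime (Nat.Coprime.mul_left (ca.symm.coprime_dvd_right hd)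
        (cb.symm.coprime_dvd_right hd)), hc.map_mul_of_coprime cab]
      ring

/-- The moduli in Selberg's majorant. -/
def sieveModuli (y R : ℕ) : Finset ℕ :=
  (Finset.Icc 1 R).filter fun m => Squarefree m ∧ Nat.Coprime m y

lemma mem_sieveModuli {y R m : ℕ} :
    m ∈ sieveModuli y R ↔ (1 ≤ m ∧ m ≤ R) ∧ Squarefree m ∧ Nat.Coprime m y := by
  simp [sieveModuli]

/-- The normalising sum in Selberg's majorant. -/
def sieveMass (y R : ℕ) : ℝ := ∑ m ∈ sieveModuli y R, 1 / (Nat.totient m : ℝ)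

/-- The square root of the (unnormalised) Selberg majorant. -/
def sieveSum (y R n : ℕ) : ℝ :=
  ∑ m ∈ sieveModuli y R, (ArithmeticFunction.moebius m : ℝ) / Nat.totient m * ramanujanSum n m

/-- The index set of the expansion of the square of `sieveSum`. -/
def sieveIndex (y R : ℕ) : Finset ((_ : ℕ × ℕ) × ℕ) :=
  (sieveModuli y R ×ˢ sieveModuli y R).sigma fun m => (m.1.gcd m.2).divisors

/-- The modulus attached to an index. -/
def sieveIndexModulus (τ : (_ : ℕ × ℕ) × ℕ) : ℕ :=
  τ.1.1 / τ.1.1.gcd τ.1.2 * (τ.1.2 / τ.1.1.gcd τ.1.2) * τ.2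

/-- The weight attached to an index. -/
def sieveIndexWeight (τ : (_ : ℕ × ℕ) × ℕ) : ℝ :=
  (ArithmeticFunction.moebius τ.1.1 : ℝ) / Nat.totient τ.1.1 *
    ((ArithmeticFunction.moebius τ.1.2 : ℝ) / Nat.totient τ.1.2) *
    ((Nat.totient (τ.1.1.gcd τ.1.2 / τ.2) : ℝ) * subTwoFun τ.2)

/-- The coefficient of the `q`-th Ramanujan sum in the square of `sieveSum`. -/
def sieveCoeff (y R q : ℕ) : ℝ :=
  ∑ τ ∈ (sieveIndex y R).filter (fun τ => sieveIndexModulus τ = q), sieveIndexWeight τ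

lemma sieveIndex_facts {y R : ℕ} {τ : (_ : ℕ × ℕ) × ℕ} (hτ : τ ∈ sieveIndex y R) :
    ∃ a b h k, τ = ⟨(a * (h * k), b * (h * k)), h⟩ ∧ τ.1.1.gcd τ.1.2 = h * k ∧
      sieveIndexModulus τ = a * b * h ∧ τ.1.1 / τ.1.1.gcd τ.1.2 = a ∧
      τ.1.2 / τ.1.1.gcd τ.1.2 = b ∧ τ.1.1.gcd τ.1.2 / τ.2 = k ∧ Squarefree (a * b * h * k) ∧
      a * (h * k) ∈ sieveModuli y R ∧ b * (h * k) ∈ sieveModuli y R := by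
  obtain ⟨⟨m₁, m₂⟩, h⟩ := τ
  simp only [sieveIndex, Finset.mem_sigma, Finset.mem_product] at hτ
  obtain ⟨⟨hm1, hm2⟩, hh⟩ := hτ
  have h₁ := (mem_sieveModuli.1 hm1).2.1
  have h₂ := (mem_sieveModuli.1 hm2).2.1
  obtain ⟨a, b, e1, e2, d1, d2, cab, ca, cb, hsq⟩ := squarefree_gcd_split h₁ h₂
  obtain ⟨k, hk⟩ := Nat.dvd_of_mem_divisors hh
  have hpos : 0 < h := Nat.pos_of_mem_divisors hh
  refine ⟨a, b, h, k, ?_, hk, ?_, d1, d2, ?_, ?_, ?_, ?_⟩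
  · rw [← hk, mul_comm a, mul_comm b, ← e1, ← e2]
  · simp only [sieveIndexModulus, d1, d2]
  · simp only [hk]; exact Nat.mul_div_cancel_left _ hpos
  · rw [hk] at hsq
    convert hsq using 1
    ring
  · rwa [← hk, mul_comm a, ← e1]
  · rwa [← hk, mul_comm b, ← e2]

lemma sieveIndexModulus_mem {y R : ℕ} {τ : (_ : ℕ × ℕ) × ℕ} (hτ : τ ∈ sieveIndex y R) :
    sieveIndexModulus τ ∈ sieveModuli y (R ^ 2) := by
  obtain ⟨a, b, h, k, -, -, e, -, -, -, hsq, h1, h2⟩ := sieveIndex_facts hτ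
  rw [e]
  obtain ⟨⟨p1, l1⟩, -, c1⟩ := mem_sieveModuli.1 h1
  obtain ⟨⟨p2, l2⟩, -, c2⟩ := mem_sieveModuli.1 h2
  have hs : Squarefree (a * b * h) := hsq.squarefree_of_dvd (dvd_mul_right _ _)
  rw [mem_sieveModuli]
  refine ⟨⟨hs.ne_zero.bot_lt, ?_⟩, hs, ?_⟩
  · calc a * b * h ≤ (a * (h * k)) * (b * (h * k)) := by
          refine Nat.le_of_dvd (Nat.mul_pos p1 p2) ⟨h * k * k, by ring⟩
      _ ≤ R * R := Nat.mul_le_mul l1 l2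
      _ = R ^ 2 := (sq R).symm
  · refine Nat.Coprime.coprime_dvd_left ⟨h * k * k, ?_⟩ (c1.mul_left c2)
    ring

/-- The square of the sieve sum as a combination of Ramanujan sums. -/
theorem sieveSum_sq (y R n : ℕ) :
    sieveSum y R n ^ 2 = ∑ q ∈ sieveModuli y (R ^ 2), sieveCoeff y R q * ramanujanSum n q := by
  have h1 : sieveSum y R n ^ 2 =
      ∑ τ ∈ sieveIndex y R, sieveIndexWeight τ * ramanujanSum n (sieveIndexModulus τ) := by
    rw [sieveIndex, Finset.sum_sigma, Finset.sum_product, sq, sieveSum, Finset.sum_mul_sum]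
    refine Finset.sum_congr rfl fun m₁ hm1 => Finset.sum_congr rfl fun m₂ hm2 => ?_
    have h₁ := (mem_sieveModuli.1 hm1).2.1
    have h₂ := (mem_sieveModuli.1 hm2).2.1
    rw [mul_mul_mul_comm, ramanujanSum_mul h₁ h₂, Finset.mul_sum]
    refine Finset.sum_congr rfl fun h _ => ?_
    rw [sieveIndexWeight, sieveIndexModulus]
    ring
  rw [h1, ← Finset.sum_fiberwise_of_maps_to (fun τ hτ => sieveIndexModulus_mem hτ)]
  refine Finset.sum_congr rfl fun q _ => ?_
  rw [sieveCoeff, Finset.sum_mul]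
  refine Finset.sum_congr rfl fun τ hτ => ?_
  rw [(Finset.mem_filter.1 hτ).2]

lemma abs_sieveIndexWeight_le {y R : ℕ} {τ : (_ : ℕ × ℕ) × ℕ} (hτ : τ ∈ sieveIndex y R) :
    |sieveIndexWeight τ| ≤ 1 / (Nat.totient (sieveIndexModulus τ) : ℝ) *
      (1 / (Nat.totient (τ.1.1.gcd τ.1.2 / τ.2) : ℝ)) := by
  obtain ⟨a, b, h, k, e, e0, e1, -, -, e2, hsq, h1, h2⟩ := sieveIndex_facts hτ
  rw [sieveIndexWeight, e1, e2]
  subst e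
  simp only
  have hs : Squarefree (a * b * h) := hsq.squarefree_of_dvd (dvd_mul_right _ _)
  have cabhk := Nat.coprime_of_squarefree_mul hsq
  have cabh := Nat.coprime_of_squarefree_mul hs
  have cab := Nat.coprime_of_squarefree_mul (hs.squarefree_of_dvd (dvd_mul_right (a * b) h))
  have cah : Nat.Coprime a (h * k) := Nat.Coprime.mul_right cabh.coprime_mul_right
    (cabhk.coprime_dvd_left ⟨b * h, by ring⟩)
  have cbh : Nat.Coprime b (h * k) := Nat.Coprime.mul_right cabh.coprime_mul_left
    (cabhk.coprime_dvd_left ⟨a * h, by ring⟩)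
  have chk : Nat.Coprime h k := cabhk.coprime_mul_left
  rw [Nat.totient_mul cah, Nat.totient_mul cbh, Nat.totient_mul chk, Nat.totient_mul cabh,
    Nat.totient_mul cab]
  have pos : ∀ d : ℕ, d ∣ a * b * h * k → (0 : ℝ) < Nat.totient d := fun d hd => by
    exact_mod_cast Nat.totient_pos.2 (Nat.pos_of_dvd_of_pos hd hsq.ne_zero.bot_lt)
  have pa := pos a ⟨b * h * k, by ring⟩
  have pb := pos b ⟨a * h * k, by ring⟩
  have ph := pos h ⟨a * b * k, by ring⟩
  have pk := pos k ⟨a * b * h, by ring⟩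
  have hmu : ∀ m : ℕ, |((ArithmeticFunction.moebius m : ℤ) : ℝ)| ≤ 1 := fun m => by
    exact_mod_cast ArithmeticFunction.abs_moebius_le_one
  have hψ : |subTwoFun h| ≤ Nat.totient h := abs_subTwoFun_le
    (hs.squarefree_of_dvd (dvd_mul_left _ _))
  push_cast
  rw [abs_mul, abs_mul, abs_mul, abs_div, abs_div, abs_of_pos pk,
    abs_of_pos (by positivity : (0 : ℝ) < Nat.totient a * (Nat.totient h * Nat.totient k)),
    abs_of_pos (by positivity : (0 : ℝ) < Nat.totient b * (Nat.totient h * Nat.totient k))]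
  calc _ ≤ 1 / ((Nat.totient a : ℝ) * (Nat.totient h * Nat.totient k)) *
        (1 / ((Nat.totient b : ℝ) * (Nat.totient h * Nat.totient k))) *
        (Nat.totient k * Nat.totient h) := by
          gcongr
          · exact hmu _
          · exact hmu _
    _ = _ := by field_simp

/-- The size of the coefficients in the expansion of the square of the sieve sum. -/
theorem abs_sieveCoeff_le {y R q : ℕ} (hq : q ≠ 0) :
    |sieveCoeff y R q| ≤ (q.divisors.card : ℝ) ^ 2 * (1 / Nat.totient q) * sieveMass y R := by
  set F := (sieveIndex y R).filter (fun τ => sieveIndexModulus τ = q) with hF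
  let Φ : ((_ : ℕ × ℕ) × ℕ) → (ℕ × ℕ) × ℕ := fun τ =>
    ((τ.1.1 / τ.1.1.gcd τ.1.2, τ.1.2 / τ.1.1.gcd τ.1.2), τ.1.1.gcd τ.1.2 / τ.2)
  have hinj : Set.InjOn Φ F := by
    intro τ hτ σ hσ hΦ
    obtain ⟨hτ, hτq⟩ := Finset.mem_filter.1 hτ
    obtain ⟨hσ, hσq⟩ := Finset.mem_filter.1 hσ
    obtain ⟨a, b, h, k, e, e0, e1, e2, e3, e4, hsq, -, -⟩ := sieveIndex_facts hτ
    obtain ⟨a', b', h', k', e', e0', e1', e2', e3', e4', hsq', -, -⟩ := sieveIndex_facts hσ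
    simp only [Φ, e2, e3, e4, e2', e3', e4', Prod.mk.injEq] at hΦ
    obtain ⟨⟨rfl, rfl⟩, rfl⟩ := hΦ
    have hh : h = h' := by
      have : a * b * h = a * b * h' := by rw [← e1, ← e1', hτq, hσq]
      refine Nat.eq_of_mul_eq_mul_left ?_ this
      refine Nat.pos_of_ne_zero fun h0 => hq ?_
      rw [← hτq, e1, h0, zero_mul]
    subst hh
    rw [e, e']
  calc |sieveCoeff y R q| ≤ ∑ τ ∈ F, |sieveIndexWeight τ| := Finset.abs_sum_le_sum_abs _ _
    _ ≤ ∑ τ ∈ F, 1 / (Nat.totient q : ℝ) * (1 / (Nat.totient (Φ τ).2 : ℝ)) := by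
        refine Finset.sum_le_sum fun τ hτ => ?_
        obtain ⟨hτ, hτq⟩ := Finset.mem_filter.1 hτ
        have := abs_sieveIndexWeight_le hτ
        rwa [hτq] at this
    _ = ∑ x ∈ F.image Φ, 1 / (Nat.totient q : ℝ) * (1 / (Nat.totient x.2 : ℝ)) := by
        rw [Finset.sum_image hinj]
    _ ≤ ∑ x ∈ (q.divisors ×ˢ q.divisors) ×ˢ sieveModuli y R,
          1 / (Nat.totient q : ℝ) * (1 / (Nat.totient x.2 : ℝ)) := by
        refine Finset.sum_le_sum_of_subset_of_nonneg ?_ fun _ _ _ => by positivity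
        intro x hx
        obtain ⟨τ, hτ, rfl⟩ := Finset.mem_image.1 hx
        obtain ⟨hτ, hτq⟩ := Finset.mem_filter.1 hτ
        obtain ⟨a, b, h, k, e, e0, e1, e2, e3, e4, hsq, h1, h2⟩ := sieveIndex_facts hτ
        simp only [Φ, e2, e3, e4, Finset.mem_product, Nat.mem_divisors]
        rw [e1] at hτq
        refine ⟨⟨⟨⟨b * h, by rw [← hτq]; ring⟩, hq⟩, ⟨⟨a * h, by rw [← hτq]; ring⟩, hq⟩⟩, ?_⟩
        obtain ⟨⟨p1, l1⟩, s1, c1⟩ := mem_sieveModuli.1 h1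
        have hd : k ∣ a * (h * k) := ⟨a * h, by ring⟩
        exact mem_sieveModuli.2 ⟨⟨Nat.pos_of_dvd_of_pos hd p1, (Nat.le_of_dvd p1 hd).trans l1⟩,
          s1.squarefree_of_dvd hd, c1.coprime_dvd_left hd⟩
    _ = _ := by
        rw [Finset.sum_product]
        simp only [← Finset.mul_sum]
        rw [Finset.sum_const, Finset.card_product, sieveMass]
        simp only [nsmul_eq_mul]
        push_cast
        ring

lemma sum_inv_coprime_le_sieveMass (y R : ℕ) :
    ∑ n ∈ (Finset.Icc 1 R).filter (fun n => Nat.Coprime y n), (1 / (n : ℝ)) ≤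
      2 * sieveMass y R := by
  have hsub : (Finset.Icc 1 R).filter (fun n => Nat.Coprime y n) ⊆
      (Finset.Ioo 0 (R + 1) ×ˢ sieveModuli y R).image (fun x : ℕ × ℕ => x.1 ^ 2 * x.2) := by
    intro n hn
    obtain ⟨hn, hc⟩ := Finset.mem_filter.1 hn
    obtain ⟨h1, hR⟩ := Finset.mem_Icc.1 hn
    obtain ⟨a, b, ha, hb, rfl, hs⟩ := Nat.sq_mul_squarefree_of_pos h1
    refine Finset.mem_image.2 ⟨(b, a), Finset.mem_product.2 ⟨Finset.mem_Ioo.2 ⟨hb, ?_⟩,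
      mem_sieveModuli.2 ⟨⟨ha, ?_⟩, hs, ?_⟩⟩, rfl⟩
    · have : b ≤ b ^ 2 * a := by nlinarith [Nat.mul_pos hb ha]
      simp only
      omega
    · exact (Nat.le_of_dvd h1 (dvd_mul_left _ _)).trans hR
    · exact (hc.coprime_dvd_right (dvd_mul_left _ _)).symm
  calc _ ≤ ∑ n ∈ (Finset.Ioo 0 (R + 1) ×ˢ sieveModuli y R).image
            (fun x : ℕ × ℕ => x.1 ^ 2 * x.2), (1 / (n : ℝ)) :=
        Finset.sum_le_sum_of_subset_of_nonneg hsub fun _ _ _ => by positivity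
    _ ≤ ∑ x ∈ Finset.Ioo 0 (R + 1) ×ˢ sieveModuli y R, (1 / ((x.1 ^ 2 * x.2 : ℕ) : ℝ)) :=
        Finset.sum_image_le_of_nonneg fun _ _ => by positivity
    _ = (∑ k ∈ Finset.Ioo 0 (R + 1), ((k : ℝ) ^ 2)⁻¹) * ∑ m ∈ sieveModuli y R, 1 / (m : ℝ) := by
        rw [Finset.sum_mul_sum, Finset.sum_product]
        refine Finset.sum_congr rfl fun k _ => Finset.sum_congr rfl fun m _ => ?_
        push_cast
        rw [one_div, mul_inv, one_div]
    _ ≤ 2 * sieveMass y R := by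
        gcongr
        · have := sum_Ioo_inv_sq_le (α := ℝ) 0 (R + 1)
          simpa using this
        · refine Finset.sum_le_sum fun m hm => ?_
          have hm := (mem_sieveModuli.1 hm).1.1
          have : (0 : ℝ) < Nat.totient m := by exact_mod_cast Nat.totient_pos.2 hm
          gcongr
          exact Nat.totient_le m

lemma log_le_sum_inv_coprime {y : ℕ} (hy : 1 ≤ y) (R : ℕ) :
    (Nat.totient y : ℝ) / y * Real.log ((R / y + 1 : ℕ) : ℝ) ≤
      ∑ n ∈ (Finset.Icc 1 R).filter (fun n => Nat.Coprime y n), (1 / (n : ℝ)) := by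
  set K := R / y
  have hy0 : (0 : ℝ) < y := by exact_mod_cast hy
  calc _ ≤ (Nat.totient y : ℝ) / y * ((harmonic K : ℚ) : ℝ) := by
        gcongr
        exact log_add_one_le_harmonic K
    _ = ∑ i ∈ Finset.range K, (Nat.totient y : ℝ) * (1 / (((i + 1) * y : ℕ) : ℝ)) := by
        rw [harmonic]
        push_cast
        rw [Finset.mul_sum]
        refine Finset.sum_congr rfl fun i _ => ?_
        field_simp
    _ ≤ ∑ i ∈ Finset.range K, ∑ n ∈ (Finset.Ico (i * y + 1) (i * y + 1 + y)).filter
          (fun n => Nat.Coprime y n), (1 / (n : ℝ)) := by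
        refine Finset.sum_le_sum fun i _ => ?_
        rw [← Nat.filter_coprime_Ico_eq_totient y (i * y + 1), ← nsmul_eq_mul]
        refine Finset.card_nsmul_le_sum _ _ _ fun n hn => ?_
        obtain ⟨h1, h2⟩ := Finset.mem_Ico.1 (Finset.mem_filter.1 hn).1
        have : 0 < n := by omega
        have h3 : n ≤ (i + 1) * y := by rw [add_mul]; omega
        gcongr
    _ = ∑ n ∈ (Finset.range K).biUnion (fun i => (Finset.Ico (i * y + 1) (i * y + 1 + y)).filter
          (fun n => Nat.Coprime y n)), (1 / (n : ℝ)) := by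
        rw [Finset.sum_biUnion]
        intro i _ j _ hij
        rw [Function.onFun, Finset.disjoint_left]
        intro n hn hn'
        obtain ⟨h1, h2⟩ := Finset.mem_Ico.1 (Finset.mem_filter.1 hn).1
        obtain ⟨h3, h4⟩ := Finset.mem_Ico.1 (Finset.mem_filter.1 hn').1
        rcases lt_or_gt_of_ne hij with h | h
        · have := Nat.mul_le_mul_right y (Nat.succ_le_of_lt h)
          rw [Nat.succ_mul] at this
          omega
        · have := Nat.mul_le_mul_right y (Nat.succ_le_of_lt h)
          rw [Nat.succ_mul] at this
          omega
    _ ≤ _ := by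
        refine Finset.sum_le_sum_of_subset_of_nonneg ?_ fun _ _ _ => by positivity
        intro n hn
        obtain ⟨i, hi, hn⟩ := Finset.mem_biUnion.1 hn
        obtain ⟨hn, hc⟩ := Finset.mem_filter.1 hn
        obtain ⟨h1, h2⟩ := Finset.mem_Ico.1 hn
        have h3 := Nat.mul_le_mul_right y (Nat.succ_le_of_lt (Finset.mem_range.1 hi))
        have h4 : K * y ≤ R := Nat.div_mul_le_self R y
        rw [Nat.succ_mul] at h3
        exact Finset.mem_filter.2 ⟨Finset.mem_Icc.2 ⟨by omega, by omega⟩, hc⟩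

/-- Lower bound for the normalising sum of the Selberg sieve. -/
theorem totient_mul_log_le_sieveMass {y R : ℕ} (hy : 1 ≤ y) (hR : y ^ 2 ≤ R) :
    (Nat.totient y : ℝ) / y * Real.log (R + 1) ≤ 4 * sieveMass y R := by
  have h1 := (log_le_sum_inv_coprime hy R).trans (sum_inv_coprime_le_sieveMass y R)
  have h2 : Real.log (R + 1) ≤ 2 * Real.log ((R / y + 1 : ℕ) : ℝ) := by
    rw [← Nat.cast_ofNat (R := ℝ), ← Real.log_pow]
    refine Real.log_le_log (by positivity) ?_
    have h3 : R + 1 ≤ (R / y + 1) * y := by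
      have := Nat.lt_div_mul_add (a := R) hy
      rw [add_mul]; omega
    have h4 : y ≤ R / y + 1 := by
      have := (Nat.le_div_iff_mul_le hy).2 ((sq y).symm.trans_le hR)
      omega
    have : R + 1 ≤ (R / y + 1) ^ 2 := by
      rw [sq]; exact h3.trans (Nat.mul_le_mul_left _ h4)
    exact_mod_cast this
  calc _ ≤ (Nat.totient y : ℝ) / y * (2 * Real.log ((R / y + 1 : ℕ) : ℝ)) := by gcongr
    _ = 2 * ((Nat.totient y : ℝ) / y * Real.log ((R / y + 1 : ℕ) : ℝ)) := by ring
    _ ≤ _ := by linarith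

lemma one_le_sieveMass (y : ℕ) {R : ℕ} (hR : 1 ≤ R) : 1 ≤ sieveMass y R := by
  have h : 1 ∈ sieveModuli y R := mem_sieveModuli.2 ⟨⟨le_rfl, hR⟩, squarefree_one,
    Nat.coprime_one_left y⟩
  calc (1 : ℝ) = 1 / (Nat.totient 1 : ℝ) := by simp
    _ ≤ _ := Finset.single_le_sum (f := fun m : ℕ => 1 / (Nat.totient m : ℝ))
      (fun _ _ => by positivity) h

lemma sieveSum_of_coprime {y R n : ℕ} (h : ∀ m ∈ sieveModuli y R, Nat.Coprime m n) :
    sieveSum y R n = sieveMass y R := by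
  refine Finset.sum_congr rfl fun m hm => ?_
  have hs := (mem_sieveModuli.1 hm).2.1
  rw [ramanujanSum_of_coprime hs.ne_zero (h m hm), div_mul_eq_mul_div, ← sq]
  congr 1
  exact_mod_cast ArithmeticFunction.moebius_sq_eq_one_of_squarefree hs

/-- The normalised coefficients are `≪_ε q^{ε - 1}`. -/
theorem exists_abs_sieveCoeff_le {ε : ℝ} (hε : 0 < ε) :
    ∃ C : ℝ, 1 ≤ C ∧ ∀ y R q : ℕ, 1 ≤ R → Squarefree q →
      |sieveCoeff y R q / sieveMass y R| ≤ C * (q : ℝ) ^ (ε - 1) := by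
  obtain ⟨C, hC, h⟩ := exists_card_divisors_le_rpow (ε := ε / 3) (by positivity)
  refine ⟨C ^ 3, one_le_pow₀ hC, fun y R q hR hq => ?_⟩
  have hG : 0 < sieveMass y R := one_pos.trans_le (one_le_sieveMass y hR)
  have hq0 : (0 : ℝ) < q := by exact_mod_cast hq.ne_zero.bot_lt
  have hφ : (0 : ℝ) < Nat.totient q := by exact_mod_cast Nat.totient_pos.2 hq.ne_zero.bot_lt
  rw [abs_div, abs_of_pos hG, div_le_iff₀ hG]
  refine (abs_sieveCoeff_le hq.ne_zero).trans ?_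
  refine mul_le_mul_of_nonneg_right ?_ hG.le
  calc (q.divisors.card : ℝ) ^ 2 * (1 / Nat.totient q)
      ≤ (q.divisors.card : ℝ) ^ 2 * (q.divisors.card / q) := by
        gcongr ?_ * ?_
        rw [div_le_div_iff₀ hφ hq0, one_mul, mul_comm]
        exact le_totient_mul_card_divisors hq
    _ = (q.divisors.card : ℝ) ^ 3 * (q : ℝ)⁻¹ := by ring
    _ ≤ (C * (q : ℝ) ^ (ε / 3)) ^ 3 * (q : ℝ)⁻¹ := by
        gcongr
        exact h q hq.ne_zero
    _ = _ := by
        rw [mul_pow, ← Real.rpow_natCast ((q : ℝ) ^ (ε / 3)) 3, ← Real.rpow_mul hq0.le,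
          ← Real.rpow_neg_one, mul_assoc, ← Real.rpow_add hq0]
        congr 2
        push_cast
        ring

lemma inv_le_norm_one_sub_of_pow_eq_one {ζ : ℂ} {D : ℕ} (hD : 0 < D) (h : ζ ^ D = 1)
    (hne : ζ ≠ 1) : 1 / (D : ℝ) ≤ ‖1 - ζ‖ := by
  have hn : ‖ζ‖ = 1 := by
    have := congrArg norm h
    rw [norm_pow, norm_one] at this
    exact (pow_eq_one_iff_of_nonneg (norm_nonneg _) hD.ne').1 this
  have hk : ∀ k : ℕ, ‖1 - ζ ^ k‖ ≤ k * ‖1 - ζ‖ := by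
    intro k
    induction k with
    | zero => simp
    | succ k ih =>
      calc ‖1 - ζ ^ (k + 1)‖ = ‖(1 - ζ) + ζ * (1 - ζ ^ k)‖ := by congr 1; ring
        _ ≤ ‖1 - ζ‖ + ‖ζ‖ * ‖1 - ζ ^ k‖ := by
            rw [← norm_mul]; exact norm_add_le _ _
        _ ≤ _ := by
            rw [hn, one_mul]
            push_cast
            linarith
  have hsum : ∑ k ∈ Finset.range D, ζ ^ k = 0 := by
    have := geom_sum_mul ζ D
    rw [h, sub_self] at this
    exact (mul_eq_zero.1 this).resolve_right (sub_ne_zero.2 hne)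
  have h1 : (D : ℂ) = ∑ k ∈ Finset.range D, (1 - ζ ^ k) := by
    rw [Finset.sum_sub_distrib, hsum]
    simp
  have hD0 : (0 : ℝ) < D := by exact_mod_cast hD
  have h2 : (D : ℝ) ≤ D * (D * ‖1 - ζ‖) := by
    calc (D : ℝ) = ‖(D : ℂ)‖ := by simp
      _ ≤ ∑ k ∈ Finset.range D, ‖1 - ζ ^ k‖ := by rw [h1]; exact norm_sum_le _ _
      _ ≤ ∑ k ∈ Finset.range D, D * ‖1 - ζ‖ := by
          refine Finset.sum_le_sum fun k hk' => (hk k).trans ?_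
          have : k ≤ D := (Finset.mem_range.1 hk').le
          gcongr
      _ = _ := by simp
  rw [div_le_iff₀ hD0, mul_comm]
  by_contra! h3
  nlinarith

lemma norm_geom_sum_le_card {w : ℂ} (hw : ‖w‖ = 1) (L : ℕ) :
    ‖∑ m ∈ Finset.range L, w ^ m‖ ≤ L := by
  calc _ ≤ ∑ m ∈ Finset.range L, ‖w ^ m‖ := norm_sum_le _ _
    _ = L := by simp [hw]

lemma norm_geom_sum_le_div {w : ℂ} (hw : ‖w‖ = 1) (L : ℕ) {η : ℝ} (hη : 0 < η)
    (h : η ≤ ‖1 - w‖) : ‖∑ m ∈ Finset.range L, w ^ m‖ ≤ 2 / η := by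
  have h1 := congrArg norm (geom_sum_mul w L)
  rw [norm_mul, norm_sub_rev w] at h1
  have h2 : ‖w ^ L - 1‖ ≤ 2 := by
    calc _ ≤ ‖w ^ L‖ + ‖(1 : ℂ)‖ := norm_sub_le _ _
      _ = 2 := by rw [norm_pow, hw]; norm_num
  rw [le_div_iff₀ hη]
  calc _ ≤ ‖∑ m ∈ Finset.range L, w ^ m‖ * ‖1 - w‖ := by gcongr
    _ ≤ 2 := by rw [h1]; exact h2

/-- The integers `n < N` with `n ≡ b (mod y)`. -/
def residueWindow (N y : ℕ) (b : ℤ) : Finset ℕ :=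
  (Finset.range N).filter fun n : ℕ => (n : ℤ) % (y : ℤ) = b % (y : ℤ)

lemma exists_residueWindow_eq_image {N y : ℕ} (hy : 1 ≤ y) (hyN : y ≤ N) (b : ℤ) :
    ∃ b' L : ℕ, (L : ℝ) ≤ 2 * (N / y) ∧
      residueWindow N y b = (Finset.range L).image (fun m => b' + y * m) := by
  have hb0 : 0 ≤ b % y := Int.emod_nonneg _ (by omega)
  have hb1 : b % y < y := Int.emod_lt_of_pos _ (by omega)
  obtain ⟨b', hb'⟩ := Int.eq_ofNat_of_zero_le hb0
  have hlt : b' < y := by omega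
  refine ⟨b', (N - b' + y - 1) / y, ?_, ?_⟩
  · have hy0 : (0 : ℝ) < y := by exact_mod_cast hy
    have h1 : (N - b' + y - 1) / y * y ≤ N + y - 1 :=
      (Nat.div_mul_le_self _ _).trans (by omega)
    have h2 : (N - b' + y - 1) / y * y ≤ 2 * N := by omega
    have h3 : (((N - b' + y - 1) / y : ℕ) : ℝ) * y ≤ 2 * N := by exact_mod_cast h2
    rw [← mul_div_assoc, le_div_iff₀ hy0]
    exact h3
  · ext n
    simp only [residueWindow, Finset.mem_filter, Finset.mem_range, Finset.mem_image, hb']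
    have key : ∀ m : ℕ, m < (N - b' + y - 1) / y ↔ b' + y * m < N := by
      intro m
      rw [← Nat.succ_le_iff, Nat.le_div_iff_mul_le hy, Nat.succ_mul, mul_comm m y]
      omega
    constructor
    · rintro ⟨h1, h2⟩
      have h3 : n % y = b' := by exact_mod_cast h2
      refine ⟨n / y, (key _).2 ?_, ?_⟩ <;> rw [← h3, Nat.mod_add_div]
      exact h1
    · rintro ⟨m, hm, rfl⟩
      refine ⟨(key _).1 hm, ?_⟩
      have : (b' + y * m) % y = b' := by rw [Nat.add_mul_mod_self_left, Nat.mod_eq_of_lt hlt]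
      exact_mod_cast this

/-- Roots of unity of order less than `D` and coprime to `y` have well separated `y`-th powers. -/
lemma inv_le_norm_pow_sub_pow {D y q q' : ℕ} {z z' : ℂ} (hq : q ∈ sieveModuli y D)
    (hq' : q' ∈ sieveModuli y D) (hz : z ∈ primitiveRoots q ℂ) (hz' : z' ∈ primitiveRoots q' ℂ)
    (hne : z ≠ z') : 1 / (D : ℝ) ^ 2 ≤ ‖z ^ y - z' ^ y‖ := by
  obtain ⟨⟨hq1, hqD⟩, -, hqy⟩ := mem_sieveModuli.1 hq
  obtain ⟨⟨hq1', hqD'⟩, -, hqy'⟩ := mem_sieveModuli.1 hq'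
  have pz : z ^ q = 1 := (isPrimitiveRoot_of_mem_primitiveRoots hz).pow_eq_one
  have pz' : z' ^ q' = 1 := (isPrimitiveRoot_of_mem_primitiveRoots hz').pow_eq_one
  have hz'0 : z' ≠ 0 := (isPrimitiveRoot_of_mem_primitiveRoots hz').ne_zero (by omega)
  have hz'n : ‖z'‖ = 1 := (isPrimitiveRoot_of_mem_primitiveRoots hz').norm'_eq_one (by omega)
  set ω := z / z' with hω
  have hωq : ω ^ (q * q') = 1 := by
    rw [hω, div_pow, pow_mul, pz, mul_comm q, pow_mul, pz', one_pow, one_pow, div_one]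
  have hω1 : ω ≠ 1 := fun h => hne ((div_eq_one_iff_eq hz'0).1 h)
  have hωy : ω ^ y ≠ 1 := by
    intro h
    have h1 : orderOf ω ∣ Nat.gcd (q * q') y :=
      Nat.dvd_gcd (orderOf_dvd_of_pow_eq_one hωq) (orderOf_dvd_of_pow_eq_one h)
    rw [Nat.Coprime.gcd_eq_one (hqy.mul_left hqy'), Nat.dvd_one, orderOf_eq_one_iff] at h1
    exact hω1 h1
  have hpos : 0 < q * q' := Nat.mul_pos hq1 hq1'
  have h1 := inv_le_norm_one_sub_of_pow_eq_one hpos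
    (show (ω ^ y) ^ (q * q') = 1 by rw [← pow_mul, mul_comm, pow_mul, hωq, one_pow]) hωy
  have h2 : ‖z ^ y - z' ^ y‖ = ‖1 - ω ^ y‖ := by
    have : z ^ y - z' ^ y = -(z' ^ y * (1 - ω ^ y)) := by
      rw [hω, div_pow]; field_simp; ring
    rw [this, norm_neg, norm_mul, norm_pow, hz'n, one_pow, one_mul]
  rw [h2]
  refine le_trans ?_ h1
  have h3 : q * q' ≤ D ^ 2 := by rw [sq]; exact Nat.mul_le_mul hqD hqD'
  have h4 : ((q * q' : ℕ) : ℝ) ≤ (D : ℝ) ^ 2 := by exact_mod_cast h3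
  have h5 : (0 : ℝ) < ((q * q' : ℕ) : ℝ) := by exact_mod_cast hpos
  exact one_div_le_one_div_of_le h5 h4

lemma sum_norm_geom_sum_le {D y : ℕ} (𝓠 : Finset ℕ) (h𝓠 : 𝓠 ⊆ sieveModuli y D) {u : ℂ}
    (hu : ‖u‖ = 1) (L : ℕ) :
    ∑ q ∈ 𝓠, ∑ z ∈ primitiveRoots q ℂ, ‖∑ m ∈ Finset.range L, ((z * u) ^ y) ^ m‖ ≤
      L + 4 * (D : ℝ) ^ 4 := by
  classical
  set Z := 𝓠.biUnion fun q => primitiveRoots q ℂ with hZ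
  have hcard : (Z.card : ℝ) ≤ (D : ℝ) ^ 2 := by
    have h1 : Z.card ≤ 𝓠.card * D := by
      refine Finset.card_biUnion_le_card_mul _ _ _ fun q hq => ?_
      rw [Complex.card_primitiveRoots]
      exact (Nat.totient_le q).trans (mem_sieveModuli.1 (h𝓠 hq)).1.2
    have h2 : 𝓠.card ≤ D := by
      refine (Finset.card_le_card h𝓠).trans ((Finset.card_filter_le _ _).trans ?_)
      simp
    have : Z.card ≤ D ^ 2 := by rw [sq]; exact h1.trans (Nat.mul_le_mul_right _ h2)
    exact_mod_cast this
  rw [← Finset.sum_biUnion (fun i _ j _ hij => IsPrimitiveRoot.disjoint hij), ← hZ]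
  have hnorm : ∀ z ∈ Z, ‖(z * u) ^ y‖ = 1 := by
    intro z hz
    obtain ⟨q, hq, hz⟩ := Finset.mem_biUnion.1 hz
    have := (mem_sieveModuli.1 (h𝓠 hq)).1.1
    rw [norm_pow, norm_mul, hu,
      (isPrimitiveRoot_of_mem_primitiveRoots hz).norm'_eq_one (by omega), mul_one, one_pow]
  rcases Z.eq_empty_or_nonempty with h0 | ⟨z₁, hz₁⟩
  · rw [h0, Finset.sum_empty]; positivity
  have hD : 0 < (D : ℝ) := by
    obtain ⟨q, hq, hz⟩ := Finset.mem_biUnion.1 hz₁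
    have := (mem_sieveModuli.1 (h𝓠 hq)).1
    exact_mod_cast this.1.trans this.2
  set η : ℝ := 1 / (2 * (D : ℝ) ^ 2) with hη
  have hηp : 0 < η := by positivity
  have hfar : ∀ z ∈ Z, η ≤ ‖1 - (z * u) ^ y‖ →
      ‖∑ m ∈ Finset.range L, ((z * u) ^ y) ^ m‖ ≤ 4 * (D : ℝ) ^ 2 := by
    intro z hz h
    refine (norm_geom_sum_le_div (hnorm z hz) L hηp h).trans (le_of_eq ?_)
    rw [hη]; field_simp; norm_num
  have hsep : ∀ z ∈ Z, ∀ z' ∈ Z, z ≠ z' → ‖1 - (z * u) ^ y‖ < η → η ≤ ‖1 - (z' * u) ^ y‖ := by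
    intro z hz z' hz' hne h
    obtain ⟨q, hq, hz⟩ := Finset.mem_biUnion.1 hz
    obtain ⟨q', hq', hz'⟩ := Finset.mem_biUnion.1 hz'
    have h1 := inv_le_norm_pow_sub_pow (h𝓠 hq) (h𝓠 hq') hz hz' hne
    have h2 : ‖z ^ y - z' ^ y‖ = ‖(1 - (z' * u) ^ y) - (1 - (z * u) ^ y)‖ := by
      have : (1 - (z' * u) ^ y) - (1 - (z * u) ^ y) = u ^ y * (z ^ y - z' ^ y) := by
        rw [mul_pow, mul_pow]; ring
      rw [this, norm_mul, norm_pow, hu, one_pow, one_mul]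
    rw [h2] at h1
    have h3 := norm_sub_le (1 - (z' * u) ^ y) (1 - (z * u) ^ y)
    have h4 : 1 / (D : ℝ) ^ 2 = η + η := by rw [hη]; field_simp; norm_num
    linarith
  have hlast : (Z.card : ℝ) * (4 * (D : ℝ) ^ 2) ≤ 4 * (D : ℝ) ^ 4 := by
    calc _ ≤ (D : ℝ) ^ 2 * (4 * (D : ℝ) ^ 2) := by gcongr
      _ = _ := by ring
  by_cases hex : ∃ z₀ ∈ Z, ‖1 - (z₀ * u) ^ y‖ < η
  · obtain ⟨z₀, hz₀, h⟩ := hex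
    rw [← Finset.add_sum_erase _ _ hz₀]
    have h1 : ∑ z ∈ Z.erase z₀, ‖∑ m ∈ Finset.range L, ((z * u) ^ y) ^ m‖ ≤
        Z.card * (4 * (D : ℝ) ^ 2) := by
      calc _ ≤ ∑ z ∈ Z.erase z₀, 4 * (D : ℝ) ^ 2 := by
            refine Finset.sum_le_sum fun z hz => ?_
            obtain ⟨hne, hz⟩ := Finset.mem_erase.1 hz
            exact hfar z hz (hsep z₀ hz₀ z hz hne.symm h)
        _ ≤ _ := by
            rw [Finset.sum_const, nsmul_eq_mul]
            gcongr
            exact Finset.erase_subset _ _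
    have h2 := norm_geom_sum_le_card (hnorm z₀ hz₀) L
    linarith
  · push Not at hex
    calc _ ≤ ∑ z ∈ Z, 4 * (D : ℝ) ^ 2 := Finset.sum_le_sum fun z hz => hfar z hz (hex z hz)
      _ = Z.card * (4 * (D : ℝ) ^ 2) := by rw [Finset.sum_const, nsmul_eq_mul]
      _ ≤ _ := by
        have : (0 : ℝ) ≤ L := by positivity
        linarith

/-- Fourier bound for a combination of Ramanujan sums on a residue window. -/
theorem norm_sum_ramanujanSum_mul_pow_le {N y D : ℕ} (hy : 1 ≤ y) (hyN : y ≤ N) (b : ℤ)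
    (𝓠 : Finset ℕ) (h𝓠 : 𝓠 ⊆ sieveModuli y D) (v : ℕ → ℝ) {V : ℝ} (hV : 0 ≤ V)
    (hv : ∀ q ∈ 𝓠, |v q| ≤ V) {u : ℂ} (hu : ‖u‖ = 1) :
    ‖∑ n ∈ residueWindow N y b, ((∑ q ∈ 𝓠, v q * ramanujanSum n q : ℝ) : ℂ) * u ^ n‖ ≤
      V * (2 * (N / y) + 4 * (D : ℝ) ^ 4) := by
  obtain ⟨b', L, hL, hS⟩ := exists_residueWindow_eq_image hy hyN b
  have h1 : ∑ n ∈ residueWindow N y b, ((∑ q ∈ 𝓠, v q * ramanujanSum n q : ℝ) : ℂ) * u ^ n =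
      ∑ q ∈ 𝓠, ∑ z ∈ primitiveRoots q ℂ, (v q : ℂ) *
        ((z * u) ^ b' * ∑ m ∈ Finset.range L, ((z * u) ^ y) ^ m) := by
    rw [hS, Finset.sum_image]
    · push_cast
      simp_rw [Finset.sum_mul, Finset.mul_sum]
      rw [Finset.sum_comm]
      refine Finset.sum_congr rfl fun q hq => ?_
      rw [Finset.sum_comm]
      refine Finset.sum_congr rfl fun m _ => ?_
      rw [ramanujanSum_eq_sum_primitiveRoots (mem_sieveModuli.1 (h𝓠 hq)).1.1, Finset.mul_sum,
        Finset.sum_mul]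
      refine Finset.sum_congr rfl fun z _ => ?_
      rw [← pow_mul, ← pow_add, mul_pow]
      ring
    · intro m _ m' _ h
      simp only at h
      exact Nat.eq_of_mul_eq_mul_left hy (by omega)
  rw [h1]
  calc _ ≤ ∑ q ∈ 𝓠, ∑ z ∈ primitiveRoots q ℂ,
        V * ‖∑ m ∈ Finset.range L, ((z * u) ^ y) ^ m‖ := by
        refine (norm_sum_le _ _).trans (Finset.sum_le_sum fun q hq => ?_)
        refine (norm_sum_le _ _).trans (Finset.sum_le_sum fun z hz => ?_)
        have hz1 : ‖z‖ = 1 := (isPrimitiveRoot_of_mem_primitiveRoots hz).norm'_eq_one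
          (by have := (mem_sieveModuli.1 (h𝓠 hq)).1.1; omega)
        rw [norm_mul, norm_mul, norm_pow, norm_mul, hz1, hu, mul_one, one_pow, one_mul,
          Complex.norm_real, Real.norm_eq_abs]
        gcongr
        exact hv q hq
    _ = V * ∑ q ∈ 𝓠, ∑ z ∈ primitiveRoots q ℂ, ‖∑ m ∈ Finset.range L, ((z * u) ^ y) ^ m‖ := by
        simp_rw [Finset.mul_sum]
    _ ≤ V * (L + 4 * (D : ℝ) ^ 4) := by
        gcongr
        exact sum_norm_geom_sum_le 𝓠 h𝓠 hu L
    _ ≤ _ := by gcongr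

/-- The divisors of `n` up to `D` that are coprime to `y`. -/
def smallDivisors (D y n : ℕ) : Finset ℕ :=
  (Finset.Icc 1 D).filter fun d => Nat.Coprime d y ∧ d ∣ n

lemma mem_smallDivisors {D y n d : ℕ} :
    d ∈ smallDivisors D y n ↔ (1 ≤ d ∧ d ≤ D) ∧ Nat.Coprime d y ∧ d ∣ n := by
  simp [smallDivisors]

lemma abs_sum_ramanujanSum_le {D y : ℕ} (𝓠 : Finset ℕ) (h𝓠 : 𝓠 ⊆ sieveModuli y D) (v : ℕ → ℝ)
    {V : ℝ} (hV : 0 ≤ V) (hv : ∀ q ∈ 𝓠, |v q| ≤ V) (n : ℕ) :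
    |∑ q ∈ 𝓠, v q * ramanujanSum n q| ≤ V * D * (smallDivisors D y n).card := by
  have h1 : ∀ q ∈ 𝓠, |v q * ramanujanSum n q| ≤
      V * ∑ d ∈ smallDivisors D y n, if d ∣ q then (d : ℝ) else 0 := by
    intro q hq
    obtain ⟨⟨hq1, hqD⟩, -, hqy⟩ := mem_sieveModuli.1 (h𝓠 hq)
    rw [abs_mul]
    refine mul_le_mul (hv q hq) ((abs_ramanujanSum_le q n).trans ?_) (abs_nonneg _) hV
    rw [← Finset.sum_filter, ← Finset.sum_filter]
    refine Finset.sum_le_sum_of_subset_of_nonneg ?_ fun _ _ _ => by positivity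
    intro d hd
    obtain ⟨hd, hdn⟩ := Finset.mem_filter.1 hd
    have hdq := Nat.dvd_of_mem_divisors hd
    exact Finset.mem_filter.2 ⟨mem_smallDivisors.2 ⟨⟨Nat.pos_of_mem_divisors hd,
      (Nat.le_of_dvd hq1 hdq).trans hqD⟩, hqy.coprime_dvd_left hdq, hdn⟩, hdq⟩
  calc _ ≤ ∑ q ∈ 𝓠, V * ∑ d ∈ smallDivisors D y n, (if d ∣ q then (d : ℝ) else 0) :=
        (Finset.abs_sum_le_sum_abs _ _).trans (Finset.sum_le_sum h1)
    _ = V * ∑ d ∈ smallDivisors D y n, ∑ q ∈ 𝓠, (if d ∣ q then (d : ℝ) else 0) := by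
        rw [← Finset.mul_sum, Finset.sum_comm]
    _ ≤ V * ∑ d ∈ smallDivisors D y n, (D : ℝ) := by
        gcongr with d hd
        rw [← Finset.sum_filter, Finset.sum_const, nsmul_eq_mul]
        have h2 : (𝓠.filter (fun q => d ∣ q)).card ≤ D / d := by
          rw [← Nat.Ioc_filter_dvd_card_eq_div]
          refine Finset.card_le_card fun q hq => ?_
          obtain ⟨hq, hdq⟩ := Finset.mem_filter.1 hq
          have := (mem_sieveModuli.1 (h𝓠 hq)).1
          exact Finset.mem_filter.2 ⟨Finset.mem_Ioc.2 ⟨by omega, this.2⟩, hdq⟩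
        have h3 := (Nat.mul_le_mul_right d h2).trans (Nat.div_mul_le_self D d)
        exact_mod_cast h3
    _ = _ := by
        rw [Finset.sum_const, nsmul_eq_mul]
        ring

lemma card_smallDivisors_pow_le (D y n p : ℕ) :
    (smallDivisors D y n).card ^ p ≤
      ∑ m ∈ smallDivisors (D ^ p) y n, m.divisors.card ^ p := by
  classical
  set T := Fintype.piFinset fun _ : Fin p => smallDivisors D y n with hT
  have hmem : ∀ t ∈ T, ∀ i, t i ∈ smallDivisors D y n := fun t ht i =>
    Fintype.mem_piFinset.1 ht i
  have hmaps : ∀ t ∈ T, (Finset.univ : Finset (Fin p)).lcm t ∈ smallDivisors (D ^ p) y n := by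
    intro t ht
    have hdvd : (Finset.univ : Finset (Fin p)).lcm t ∣ ∏ i, t i :=
      Finset.lcm_dvd fun i hi => Finset.dvd_prod_of_mem _ hi
    have hpos : 0 < ∏ i, t i :=
      Finset.prod_pos fun i _ => (mem_smallDivisors.1 (hmem t ht i)).1.1
    refine mem_smallDivisors.2 ⟨⟨Nat.pos_of_dvd_of_pos hdvd hpos, ?_⟩, ?_, ?_⟩
    · refine (Nat.le_of_dvd hpos hdvd).trans ?_
      calc ∏ i, t i ≤ ∏ _i : Fin p, D :=
            Finset.prod_le_prod' fun i _ => (mem_smallDivisors.1 (hmem t ht i)).1.2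
        _ = D ^ p := by simp
    · refine Nat.Coprime.coprime_dvd_left hdvd ?_
      exact Nat.Coprime.prod_left fun i _ => (mem_smallDivisors.1 (hmem t ht i)).2.1
    · exact Finset.lcm_dvd fun i _ => (mem_smallDivisors.1 (hmem t ht i)).2.2
  calc (smallDivisors D y n).card ^ p = T.card := by simp [hT]
    _ = ∑ m ∈ smallDivisors (D ^ p) y n,
        (T.filter fun t => (Finset.univ : Finset (Fin p)).lcm t = m).card :=
      Finset.card_eq_sum_card_fiberwise hmaps
    _ ≤ _ := by
      refine Finset.sum_le_sum fun m hm => ?_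
      have h1 := (mem_smallDivisors.1 hm).1.1
      calc _ ≤ (Fintype.piFinset fun _ : Fin p => m.divisors).card := by
            refine Finset.card_le_card fun t ht => ?_
            obtain ⟨-, rfl⟩ := Finset.mem_filter.1 ht
            refine Fintype.mem_piFinset.2 fun i => Nat.mem_divisors.2 ⟨?_, by omega⟩
            exact Finset.dvd_lcm (Finset.mem_univ i)
        _ = _ := by simp

lemma card_residueWindow_filter_dvd_le {N y m : ℕ} (b : ℤ) (hm : Nat.Coprime m y) :
    ((residueWindow N y b).filter (fun n => m ∣ n)).card ≤ N / (m * y) + 1 := by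
  have hinj : Set.InjOn (fun n : ℕ => n / (m * y))
      ((residueWindow N y b).filter (fun n => m ∣ n)) := by
    intro n hn n' hn' h
    obtain ⟨hn, hd⟩ := Finset.mem_filter.1 hn
    obtain ⟨hn', hd'⟩ := Finset.mem_filter.1 hn'
    have e1 : n ≡ n' [MOD y] := by
      have h1 := (Finset.mem_filter.1 hn).2
      have h2 := (Finset.mem_filter.1 hn').2
      rw [← h2] at h1
      exact_mod_cast h1
    have e2 : n ≡ n' [MOD m] :=
      ((Nat.modEq_zero_iff_dvd).2 hd).trans ((Nat.modEq_zero_iff_dvd).2 hd').symm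
    have e3 : n % (m * y) = n' % (m * y) := (Nat.modEq_and_modEq_iff_modEq_mul hm).1 ⟨e2, e1⟩
    simp only at h
    rw [← Nat.div_add_mod n (m * y), ← Nat.div_add_mod n' (m * y), h, e3]
  rw [← Finset.card_image_of_injOn hinj]
  calc _ ≤ (Finset.range (N / (m * y) + 1)).card := by
        refine Finset.card_le_card fun k hk => ?_
        obtain ⟨n, hn, rfl⟩ := Finset.mem_image.1 hk
        have := Finset.mem_range.1 (Finset.mem_filter.1 (Finset.mem_filter.1 hn).1).1
        exact Finset.mem_range.2 (Nat.lt_succ_of_le (Nat.div_le_div_right this.le))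
    _ = _ := Finset.card_range _

lemma sum_card_smallDivisors_pow_le {N y D p : ℕ} (hy : 1 ≤ y) (b : ℤ)
    (hD : (D : ℝ) ^ p ≤ N / y) :
    ∑ n ∈ residueWindow N y b, ((smallDivisors D y n).card : ℝ) ^ p ≤
      2 * (N / y) * ∑ m ∈ Finset.Icc 1 (D ^ p), (m.divisors.card : ℝ) ^ p / m := by
  have hy0 : (0 : ℝ) < y := by exact_mod_cast hy
  calc _ ≤ ∑ n ∈ residueWindow N y b, ∑ m ∈ smallDivisors (D ^ p) y n,
          (m.divisors.card : ℝ) ^ p := by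
        refine Finset.sum_le_sum fun n _ => ?_
        exact_mod_cast card_smallDivisors_pow_le D y n p
    _ = ∑ m ∈ (Finset.Icc 1 (D ^ p)).filter (fun m => Nat.Coprime m y),
          ∑ n ∈ (residueWindow N y b).filter (fun n => m ∣ n), (m.divisors.card : ℝ) ^ p := by
        refine Finset.sum_comm' fun n m => ?_
        simp only [mem_smallDivisors, Finset.mem_filter, Finset.mem_Icc]
        tauto
    _ ≤ ∑ m ∈ (Finset.Icc 1 (D ^ p)).filter (fun m => Nat.Coprime m y),
          2 * (N / y) * ((m.divisors.card : ℝ) ^ p / m) := by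
        refine Finset.sum_le_sum fun m hm => ?_
        obtain ⟨hm, hc⟩ := Finset.mem_filter.1 hm
        obtain ⟨h1, h2⟩ := Finset.mem_Icc.1 hm
        have hm0 : (0 : ℝ) < m := by exact_mod_cast h1
        have h3 : (m : ℝ) ≤ N / y := le_trans (by exact_mod_cast h2) hD
        have h4 : (((residueWindow N y b).filter (fun n => m ∣ n)).card : ℝ) ≤
            2 * (N / y) / m := by
          calc (((residueWindow N y b).filter (fun n => m ∣ n)).card : ℝ)
              ≤ ((N / (m * y) + 1 : ℕ) : ℝ) := by
                exact_mod_cast card_residueWindow_filter_dvd_le b hc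
            _ ≤ (N : ℝ) / (m * y) + 1 := by
                push_cast
                have := Nat.cast_div_le (α := ℝ) (m := N) (n := m * y)
                push_cast at this
                linarith
            _ ≤ (N : ℝ) / (m * y) + (N / y) / m := by
                gcongr
                rwa [le_div_iff₀ hm0, one_mul]
            _ = _ := by field_simp; norm_num
        rw [Finset.sum_const, nsmul_eq_mul]
        calc _ ≤ 2 * (N / y) / m * (m.divisors.card : ℝ) ^ p := by gcongr
          _ = _ := by ring
    _ ≤ ∑ m ∈ Finset.Icc 1 (D ^ p), 2 * (N / y) * ((m.divisors.card : ℝ) ^ p / m) :=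
        Finset.sum_le_sum_of_subset_of_nonneg (Finset.filter_subset _ _)
          fun _ _ _ => by positivity
    _ = _ := by rw [Finset.mul_sum]

lemma exists_sum_card_divisors_pow_div_le (p : ℕ) {ε : ℝ} (hε : 0 < ε) :
    ∃ C : ℝ, 1 ≤ C ∧ ∀ X : ℕ, 1 ≤ X →
      ∑ m ∈ Finset.Icc 1 X, (m.divisors.card : ℝ) ^ p / m ≤ C * (X : ℝ) ^ ε := by
  obtain ⟨C, hC, h⟩ := exists_card_divisors_le_rpow (ε := ε / (2 * (p + 1))) (by positivity)
  refine ⟨C ^ p * (1 + 1 / (ε / 2)), ?_, fun X hX => ?_⟩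
  · have : 0 < 1 / (ε / 2) := by positivity
    have := one_le_pow₀ hC (n := p)
    nlinarith
  have hX1 : (1 : ℝ) ≤ X := by exact_mod_cast hX
  have hsum : ∑ m ∈ Finset.Icc 1 X, (1 : ℝ) / m ≤ (1 + 1 / (ε / 2)) * (X : ℝ) ^ (ε / 2) := by
    have h1 : ∑ m ∈ Finset.Icc 1 X, (1 : ℝ) / m ≤ 1 + Real.log X := by
      have := harmonic_le_one_add_log X
      rw [harmonic_eq_sum_Icc] at this
      push_cast at this
      simpa using this
    have h2 := Real.log_le_rpow_div (x := (X : ℝ)) (by positivity) (half_pos hε)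
    have h3 := Real.one_le_rpow hX1 (half_pos hε).le
    calc _ ≤ _ := h1
      _ ≤ (X : ℝ) ^ (ε / 2) + (X : ℝ) ^ (ε / 2) / (ε / 2) := add_le_add h3 h2
      _ = _ := by ring
  calc _ ≤ ∑ m ∈ Finset.Icc 1 X, C ^ p * (X : ℝ) ^ (ε / 2) * ((1 : ℝ) / m) := by
        refine Finset.sum_le_sum fun m hm => ?_
        obtain ⟨h1, h2⟩ := Finset.mem_Icc.1 hm
        rw [mul_one_div]
        gcongr
        calc (m.divisors.card : ℝ) ^ p ≤ (C * (X : ℝ) ^ (ε / (2 * (p + 1)))) ^ p := by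
              have h3 : (m : ℝ) ≤ X := by exact_mod_cast h2
              gcongr
              refine (h m (by omega)).trans ?_
              gcongr
          _ ≤ C ^ p * (X : ℝ) ^ (ε / 2) := by
              rw [mul_pow, ← Real.rpow_natCast ((X : ℝ) ^ _), ← Real.rpow_mul (by positivity)]
              gcongr
              rw [div_mul_eq_mul_div, div_le_div_iff₀ (by positivity) (by positivity)]
              nlinarith
    _ ≤ C ^ p * (X : ℝ) ^ (ε / 2) * ((1 + 1 / (ε / 2)) * (X : ℝ) ^ (ε / 2)) := by
        rw [← Finset.mul_sum]
        gcongr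
    _ = C ^ p * (1 + 1 / (ε / 2)) * ((X : ℝ) ^ (ε / 2) * (X : ℝ) ^ (ε / 2)) := by ring
    _ = _ := by
        rw [← Real.rpow_add (by positivity)]
        ring_nf

/-- Moment bound for a combination of Ramanujan sums on a residue window. -/
theorem exists_sum_abs_sum_ramanujanSum_pow_le {p : ℕ} (hp : p ≠ 0) {ε : ℝ} (hε : 0 < ε) :
    ∃ C : ℝ, 1 ≤ C ∧ ∀ (N y D : ℕ) (b : ℤ) (𝓠 : Finset ℕ) (v : ℕ → ℝ) (V : ℝ), 1 ≤ y → 1 ≤ D →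
      (D : ℝ) ^ p ≤ N / y → 𝓠 ⊆ sieveModuli y D → 0 ≤ V → (∀ q ∈ 𝓠, |v q| ≤ V) →
      ∑ n ∈ residueWindow N y b, |∑ q ∈ 𝓠, v q * ramanujanSum n q| ^ p ≤
        (C * V * (D : ℝ) ^ (1 + ε) * ((N : ℝ) / y) ^ (1 / (p : ℝ))) ^ p := by
  obtain ⟨C, hC, h⟩ := exists_sum_card_divisors_pow_div_le p hε
  refine ⟨2 * C, by linarith, fun N y D b 𝓠 v V hy hD hDp h𝓠 hV hv => ?_⟩
  have hD0 : (0 : ℝ) < D := by exact_mod_cast hD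
  have hM : (0 : ℝ) ≤ (N : ℝ) / y := by positivity
  have hp1 : (1 : ℕ) ≤ p := Nat.one_le_iff_ne_zero.2 hp
  calc _ ≤ ∑ n ∈ residueWindow N y b, (V * D) ^ p * ((smallDivisors D y n).card : ℝ) ^ p := by
        refine Finset.sum_le_sum fun n _ => ?_
        rw [← mul_pow]
        gcongr
        exact abs_sum_ramanujanSum_le 𝓠 h𝓠 v hV hv n
    _ ≤ (V * D) ^ p * (2 * (N / y) * (C * ((D ^ p : ℕ) : ℝ) ^ ε)) := by
        rw [← Finset.mul_sum]
        gcongr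
        refine (sum_card_smallDivisors_pow_le hy b hDp).trans ?_
        gcongr
        exact h _ (Nat.one_le_pow _ _ hD)
    _ = (2 * C) * ((V * D) ^ p * (((D : ℝ) ^ ε) ^ p) * (((N : ℝ) / y) ^ (1 / (p : ℝ))) ^ p) := by
        rw [← Real.rpow_natCast ((D : ℝ) ^ ε), ← Real.rpow_natCast (((N : ℝ) / y) ^ _),
          ← Real.rpow_mul hD0.le, ← Real.rpow_mul hM, one_div_mul_cancel (by exact_mod_cast hp),
          Real.rpow_one]
        push_cast
        rw [← Real.rpow_natCast (D : ℝ) p, ← Real.rpow_mul hD0.le, mul_comm ε]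
        ring
    _ ≤ (2 * C) ^ p * ((V * D) ^ p * (((D : ℝ) ^ ε) ^ p) *
          (((N : ℝ) / y) ^ (1 / (p : ℝ))) ^ p) := by
        gcongr
        exact le_self_pow₀ (by linarith) hp
    _ = _ := by
        rw [Real.rpow_add hD0, Real.rpow_one, ← mul_pow, ← mul_pow, ← mul_pow]
        ring

/-- The kernel on `ℤ` equal to `F` on a residue window and to zero elsewhere. -/
def windowKernel (N y : ℕ) (b : ℤ) (F : ℕ → ℝ) (m : ℤ) : ℝ :=
  ∑ n ∈ residueWindow N y b, if (n : ℤ) = m then F n else 0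

lemma primeKernel_eq_windowKernel (N y : ℕ) (b : ℤ) :
    primeKernel N y b = windowKernel N y b
      (fun n => (Nat.totient y : ℝ) / (N : ℝ) * ArithmeticFunction.vonMangoldt n) := rfl

lemma windowKernel_natCast {N y : ℕ} {b : ℤ} (F : ℕ → ℝ) {n : ℕ} (hn : n ∈ residueWindow N y b) :
    windowKernel N y b F n = F n := by
  simp [windowKernel, hn]

lemma windowKernel_eq_zero {N y : ℕ} {b : ℤ} (F : ℕ → ℝ) {m : ℤ}
    (hm : m ∉ (residueWindow N y b).image (fun n : ℕ => (n : ℤ))) :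
    windowKernel N y b F m = 0 :=
  Finset.sum_eq_zero fun n hn => if_neg fun h => hm (Finset.mem_image.2 ⟨n, hn, h⟩)

/-- The form with kernel `windowKernel N y b F` is bounded by `D` on `ℓ^r × ℓ^r`. -/
def BilinearBound (N y : ℕ) (b : ℤ) (r : ℝ) (F : ℕ → ℝ) (D : ℝ) : Prop :=
  ∀ (E : Finset ℤ) (f g : ℤ → ℝ), (∀ x, 0 ≤ f x) → (∀ x, 0 ≤ g x) →
    ∑ a ∈ E, ∑ x ∈ E, windowKernel N y b F (x - a) * f a * g x ≤
      D * windowNorm r E (fun x => f x) * windowNorm r E (fun x => g x)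

lemma BilinearBound.mono {N y : ℕ} {b : ℤ} {r D : ℝ} {F F' : ℕ → ℝ}
    (h : BilinearBound N y b r F' D) (hF : ∀ n ∈ residueWindow N y b, F n ≤ F' n) :
    BilinearBound N y b r F D := by
  refine fun E f g hf hg => le_trans ?_ (h E f g hf hg)
  gcongr with a _ x _
  · exact hg x
  · exact hf a
  · refine Finset.sum_le_sum fun n hn => ?_
    split_ifs
    · exact hF n hn
    · exact le_rfl

lemma BilinearBound.mono_right {N y : ℕ} {b : ℤ} {r D D' : ℝ} {F : ℕ → ℝ}
    (h : BilinearBound N y b r F D) (hD : D ≤ D') : BilinearBound N y b r F D' := by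
  refine fun E f g hf hg => (h E f g hf hg).trans ?_
  have := windowNorm_nonneg r E (fun x => f x)
  have := windowNorm_nonneg r E (fun x => g x)
  gcongr

lemma BilinearBound.add {N y : ℕ} {b : ℤ} {r D D' : ℝ} {F F' : ℕ → ℝ}
    (h : BilinearBound N y b r F D) (h' : BilinearBound N y b r F' D') :
    BilinearBound N y b r (fun n => F n + F' n) (D + D') := by
  intro E f g hf hg
  have hk : ∀ m, windowKernel N y b (fun n => F n + F' n) m =
      windowKernel N y b F m + windowKernel N y b F' m := by
    intro m
    rw [windowKernel, windowKernel, windowKernel, ← Finset.sum_add_distrib]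
    refine Finset.sum_congr rfl fun n _ => ?_
    split_ifs <;> simp
  simp_rw [hk, add_mul, Finset.sum_add_distrib]
  exact add_le_add (h E f g hf hg) (h' E f g hf hg)

lemma BilinearBound.const_mul {N y : ℕ} {b : ℤ} {r D c : ℝ} {F : ℕ → ℝ} (hc : 0 ≤ c)
    (h : BilinearBound N y b r F D) : BilinearBound N y b r (fun n => c * F n) (c * D) := by
  intro E f g hf hg
  have hk : ∀ m, windowKernel N y b (fun n => c * F n) m = c * windowKernel N y b F m := by
    intro m
    rw [windowKernel, windowKernel, Finset.mul_sum]
    refine Finset.sum_congr rfl fun n _ => ?_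
    split_ifs <;> simp
  simp_rw [hk, mul_assoc, ← Finset.mul_sum]
  have := mul_le_mul_of_nonneg_left (h E f g hf hg) hc
  simpa only [mul_assoc] using this

lemma BilinearBound.zero (N y : ℕ) (b : ℤ) (r : ℝ) : BilinearBound N y b r (fun _ => 0) 0 := by
  intro E f g _ _
  simp [windowKernel]

lemma BilinearBound.sum {ι : Type*} {N y : ℕ} {b : ℤ} {r : ℝ} (s : Finset ι) {F : ι → ℕ → ℝ}
    {D : ι → ℝ} (h : ∀ i ∈ s, BilinearBound N y b r (F i) (D i)) :
    BilinearBound N y b r (fun n => ∑ i ∈ s, F i n) (∑ i ∈ s, D i) := by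
  classical
  induction s using Finset.induction_on with
  | empty => simpa using BilinearBound.zero N y b r
  | insert i s hi ih =>
    simp_rw [Finset.sum_insert hi]
    exact (h i (Finset.mem_insert_self i s)).add
      (ih fun j hj => h j (Finset.mem_insert_of_mem hj))

lemma sum_le_norm_convForm (k : ℤ → ℝ) (E : Finset ℤ) (f g : ℤ → ℝ) :
    ∑ a ∈ E, ∑ x ∈ E, k (x - a) * f a * g x ≤
      ‖convForm (fun m => k m) E (fun x => f x) (fun x => g x)‖ := by
  have : convForm (fun m => k m) E (fun x => f x) (fun x => g x) =
      ((∑ a ∈ E, ∑ x ∈ E, k (x - a) * f a * g x : ℝ) : ℂ) := by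
    rw [convForm]; push_cast; rfl
  rw [this, Complex.norm_real]
  exact le_abs_self _

lemma sum_norm_windowKernel_rpow_le {N y : ℕ} {b : ℤ} {F : ℕ → ℝ} {p : ℝ} (hp : 0 < p)
    (T : Finset ℤ) :
    ∑ m ∈ T, ‖((windowKernel N y b F m : ℝ) : ℂ)‖ ^ p ≤ ∑ n ∈ residueWindow N y b, |F n| ^ p := by
  classical
  set S := (residueWindow N y b).image (fun n : ℕ => (n : ℤ)) with hS
  calc _ = ∑ m ∈ T ∩ S, ‖((windowKernel N y b F m : ℝ) : ℂ)‖ ^ p := by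
        refine (Finset.sum_subset Finset.inter_subset_left fun m hm hmS => ?_).symm
        rw [windowKernel_eq_zero F fun h => hmS (Finset.mem_inter.2 ⟨hm, h⟩), Complex.ofReal_zero,
          norm_zero, Real.zero_rpow hp.ne']
    _ ≤ ∑ m ∈ S, ‖((windowKernel N y b F m : ℝ) : ℂ)‖ ^ p :=
        Finset.sum_le_sum_of_subset_of_nonneg Finset.inter_subset_right
          fun _ _ _ => by positivity
    _ = _ := by
        rw [hS, Finset.sum_image fun _ _ _ _ h => by exact_mod_cast h]
        refine Finset.sum_congr rfl fun n hn => ?_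
        rw [windowKernel_natCast F hn, Complex.norm_real, Real.norm_eq_abs]

lemma norm_convForm_windowKernel_le_young {N y : ℕ} {b : ℤ} {F : ℕ → ℝ} {p s A : ℝ} (hp : 1 ≤ p)
    (hs : 0 < s) (hps : 1 / s = 1 - 1 / (2 * p)) (hA : 0 < A)
    (hF : ∑ n ∈ residueWindow N y b, |F n| ^ p ≤ A ^ p) (E : Finset ℤ) (f g : ℤ → ℂ) :
    ‖convForm (fun m => (windowKernel N y b F m : ℂ)) E f g‖ ≤
      A * windowNorm s E f * windowNorm s E g :=
  norm_convForm_le_young hp hs hps hA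
    (fun T => (sum_norm_windowKernel_rpow_le (by linarith) T).trans hF) E f g

lemma bilinearBound_young {N y : ℕ} {b : ℤ} {F : ℕ → ℝ} {p r A : ℝ} (hp : 1 ≤ p)
    (hr : 0 < r) (hpr : 1 / r = 1 - 1 / (2 * p)) (hA : 0 < A)
    (hF : ∑ n ∈ residueWindow N y b, |F n| ^ p ≤ A ^ p) : BilinearBound N y b r F A :=
  fun E _ _ _ _ => (sum_le_norm_convForm _ E _ _).trans
    (norm_convForm_windowKernel_le_young hp hr hpr hA hF E _ _)

lemma bilinearBound_interp {N y : ℕ} {b : ℤ} {F : ℕ → ℝ} {p s r t A B : ℝ} (hp : 1 ≤ p)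
    (hs : 0 < s) (hps : 1 / s = 1 - 1 / (2 * p)) (hr : 0 < r) (ht0 : 0 ≤ t) (ht1 : t ≤ 1)
    (hrt : 1 / r = (1 - t) / s + t / 2) (hA : 0 < A) (hB : 0 ≤ B)
    (hF : ∑ n ∈ residueWindow N y b, |F n| ^ p ≤ A ^ p)
    (hu : ∀ u : ℂ, ‖u‖ = 1 → ‖∑ n ∈ residueWindow N y b, (F n : ℂ) * u ^ n‖ ≤ B) :
    BilinearBound N y b r F (A ^ (1 - t) * B ^ t) := by
  classical
  intro E f g hf hg
  refine (sum_le_norm_convForm _ E _ _).trans ?_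
  refine norm_convForm_le_interp hs hr ht0 ht1 hrt hA.le hB
    (norm_convForm_windowKernel_le_young hp hs hps hA hF E) ?_ hf hg
  refine norm_convForm_le_fourier (S := (residueWindow N y b).image (fun n : ℕ => (n : ℤ)))
    (fun m hm => by rw [windowKernel_eq_zero F hm, Complex.ofReal_zero]) (fun u hu' => ?_) E
  rw [Finset.sum_image fun _ _ _ _ h => by exact_mod_cast h]
  refine le_trans (le_of_eq ?_) (hu u hu')
  congr 1
  refine Finset.sum_congr rfl fun n hn => ?_
  rw [windowKernel_natCast F hn, zpow_natCast]

/-- The exponents in the interpolation between the moment bound and the Fourier bound. -/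
lemma exists_interpolation_exponents {r : ℝ} (hr1 : 1 < r) (hr2 : r < 2) :
    ∃ (p : ℕ) (s t : ℝ), 1 ≤ p ∧ 0 < s ∧ 1 / s = 1 - 1 / (2 * (p : ℝ)) ∧ 0 < t ∧ t < 1 ∧
      1 / r = (1 - t) / s + t / 2 ∧ (1 - t) * (1 - 1 / (p : ℝ)) = 1 / r - 1 / (r / (r - 1)) := by
  set θ : ℝ := 2 * (1 - 1 / r) with hθ
  have hr0 : 0 < r := by linarith
  have h1 : 1 / r < 1 := by rw [div_lt_one hr0]; exact hr1
  have h2 : 1 / 2 < 1 / r := one_div_lt_one_div_of_lt hr0 hr2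
  have hθ0 : 0 < θ := by rw [hθ]; linarith
  have hθ1 : θ < 1 := by rw [hθ]; linarith
  obtain ⟨p, hp⟩ := exists_nat_gt (1 / θ)
  have hp0 : (0 : ℝ) < p := lt_trans (by positivity) hp
  have hpθ : 1 / (p : ℝ) < θ := by
    rw [div_lt_iff₀ hθ0] at hp
    rw [div_lt_iff₀ hp0]; linarith
  have hip : 0 < 1 / (p : ℝ) := by positivity
  have hq : 0 < 1 - 1 / (p : ℝ) := by linarith
  have hh : 1 / (2 * (p : ℝ)) = 1 / p / 2 := by field_simp
  refine ⟨p, 1 / (1 - 1 / (2 * (p : ℝ))), (θ - 1 / p) / (1 - 1 / p), ?_, ?_, one_div_one_div _,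
    div_pos (by linarith) hq, ?_, ?_, ?_⟩
  · exact_mod_cast hp0
  · rw [hh]; exact one_div_pos.2 (by linarith)
  · rw [div_lt_one hq]; linarith
  · rw [div_div_eq_mul_div, div_one, hh]
    generalize 1 / (p : ℝ) = x at *
    have : 1 / r = 1 - θ / 2 := by rw [hθ]; ring
    rw [this]
    field_simp
    ring
  · have : 1 / r - 1 / (r / (r - 1)) = 1 - θ := by rw [hθ]; field_simp; ring
    rw [this]
    generalize 1 / (p : ℝ) = x at *
    field_simp
    ring

lemma rpow_le_two_mul_rpow {D q e : ℝ} (hD : 0 < D) (hq : D ≤ 2 * q) (he0 : e ≤ 0)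
    (he1 : -1 ≤ e) : q ^ e ≤ 2 * D ^ e := by
  have hD2 : 0 < D / 2 := by positivity
  calc q ^ e ≤ (D / 2) ^ e := Real.rpow_le_rpow_of_nonpos hD2 (by linarith) he0
    _ = D ^ e * 2 ^ (-e) := by
        rw [Real.div_rpow hD.le (by norm_num), Real.rpow_neg (by norm_num)]; rfl
    _ ≤ D ^ e * 2 ^ (1 : ℝ) := by
        gcongr
        · norm_num
        · linarith
    _ = _ := by rw [Real.rpow_one, mul_comm]

/-- Bound for the part of the sieve kernel with moduli of dyadic size `D`. -/
theorem exists_sieve_block_bilinearBound {p : ℕ} {r s t : ℝ} (hp : 1 ≤ p) (hs : 0 < s)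
    (hps : 1 / s = 1 - 1 / (2 * (p : ℝ))) (hr : 0 < r) (ht0 : 0 < t) (ht1 : t < 1)
    (hrt : 1 / r = (1 - t) / s + t / 2) :
    ∃ C : ℝ, 0 < C ∧ ∀ (N y R D : ℕ) (b : ℤ) (𝓠 : Finset ℕ), 1 ≤ y → y ≤ N → 1 ≤ R → 1 ≤ D →
      (D : ℝ) ^ p ≤ N / y → (D : ℝ) ^ 4 ≤ N / y → 𝓠 ⊆ sieveModuli y D →
      (∀ q ∈ 𝓠, D ≤ 2 * q) →
      BilinearBound N y b r
        (fun n => ∑ q ∈ 𝓠, sieveCoeff y R q / sieveMass y R / (N / y) * ramanujanSum n q)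
        (C * (D : ℝ) ^ (-(t / 4)) * ((N : ℝ) / y) ^ (-((1 - t) * (1 - 1 / (p : ℝ))))) := by
  have hε : 0 < t / 8 := by positivity
  obtain ⟨C₁, hC₁, hv₁⟩ := exists_abs_sieveCoeff_le hε
  obtain ⟨C₂, hC₂, hv₂⟩ := exists_abs_sieveCoeff_le (ε := 1 / 2) (by norm_num)
  obtain ⟨C₃, hC₃, hmom⟩ := exists_sum_abs_sum_ramanujanSum_pow_le (p := p) (by omega) hε
  refine ⟨(2 * C₁ * C₃) ^ (1 - t) * (12 * C₂) ^ t, by positivity, ?_⟩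
  intro N y R D b 𝓠 hy hyN hR hD hDp hD4 h𝓠 hdy
  have hD1 : (1 : ℝ) ≤ D := by exact_mod_cast hD
  have hD0 : (0 : ℝ) < D := by linarith
  have hy0 : (0 : ℝ) < y := by exact_mod_cast hy
  have hN0 : (0 : ℝ) < N := by exact_mod_cast hy.trans hyN
  set M : ℝ := (N : ℝ) / y with hM
  have hM0 : 0 < M := by positivity
  have hvV : ∀ {ε C : ℝ}, 0 < ε → ε ≤ 1 → 1 ≤ C →
      (∀ y R q : ℕ, 1 ≤ R → Squarefree q →
        |sieveCoeff y R q / sieveMass y R| ≤ C * (q : ℝ) ^ (ε - 1)) →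
      ∀ q ∈ 𝓠, |sieveCoeff y R q / sieveMass y R / M| ≤ 2 * C * (D : ℝ) ^ (ε - 1) / M := by
    intro ε C h0 h1 hC h q hq
    rw [abs_div, abs_of_pos hM0]
    gcongr
    refine (h y R q hR (mem_sieveModuli.1 (h𝓠 hq)).2.1).trans ?_
    have h2 : (D : ℝ) ≤ 2 * q := by exact_mod_cast hdy q hq
    have h3 := rpow_le_two_mul_rpow (e := ε - 1) hD0 h2 (by linarith) (by linarith)
    calc _ ≤ C * (2 * (D : ℝ) ^ (ε - 1)) := by gcongr
      _ = _ := by ring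
  set A : ℝ := C₃ * (2 * C₁ * (D : ℝ) ^ (t / 8 - 1) / M) * (D : ℝ) ^ (1 + t / 8) *
    M ^ (1 / (p : ℝ)) with hA
  set B : ℝ := 2 * C₂ * (D : ℝ) ^ ((1 : ℝ) / 2 - 1) / M * (2 * M + 4 * (D : ℝ) ^ 4) with hB
  have hA0 : 0 < A := by positivity
  have hB0 : 0 < B := by positivity
  have hbound : BilinearBound N y b r
      (fun n => ∑ q ∈ 𝓠, sieveCoeff y R q / sieveMass y R / M * ramanujanSum n q)
      (A ^ (1 - t) * B ^ t) := by
    refine bilinearBound_interp (p := (p : ℝ)) (by exact_mod_cast hp) hs hps hr ht0.le ht1.le hrt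
      hA0 hB0.le ?_ fun u hu => ?_
    · simp_rw [Real.rpow_natCast]
      exact hmom N y D b 𝓠 _ _ hy hD hDp h𝓠 (by positivity)
        (hvV hε (by linarith) hC₁ hv₁)
    · exact norm_sum_ramanujanSum_mul_pow_le hy hyN b 𝓠 h𝓠 _ (by positivity)
        (hvV (by norm_num) (by norm_num) hC₂ hv₂) hu
  refine hbound.mono_right ?_
  have hA' : A = 2 * C₁ * C₃ * ((D : ℝ) ^ (t / 4) * M ^ (-(1 - 1 / (p : ℝ)))) := by
    have e1 : (D : ℝ) ^ (t / 4) = (D : ℝ) ^ (t / 8 - 1) * (D : ℝ) ^ (1 + t / 8) := by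
      rw [← Real.rpow_add hD0]; ring_nf
    have e2 : M ^ (-(1 - 1 / (p : ℝ))) = M ^ (1 / (p : ℝ)) / M := by
      rw [← Real.rpow_sub_one hM0.ne']; ring_nf
    rw [hA, e1, e2]
    ring
  have hB' : B ≤ 12 * C₂ * (D : ℝ) ^ (-(1 / 2) : ℝ) := by
    have e1 : ((1 : ℝ) / 2 - 1) = -(1 / 2) := by norm_num
    calc B ≤ 2 * C₂ * (D : ℝ) ^ ((1 : ℝ) / 2 - 1) / M * (2 * M + 4 * M) := by
          rw [hB]; gcongr
      _ = _ := by rw [e1]; field_simp; ring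
  calc A ^ (1 - t) * B ^ t
      ≤ (2 * C₁ * C₃ * ((D : ℝ) ^ (t / 4) * M ^ (-(1 - 1 / (p : ℝ))))) ^ (1 - t) *
        (12 * C₂ * (D : ℝ) ^ (-(1 / 2) : ℝ)) ^ t := by
        rw [hA']
        gcongr
    _ = (2 * C₁ * C₃) ^ (1 - t) * (12 * C₂) ^ t *
        ((D : ℝ) ^ (t / 4 * (1 - t)) * (D : ℝ) ^ (-(1 / 2) * t)) *
        M ^ (-(1 - 1 / (p : ℝ)) * (1 - t)) := by
        rw [Real.mul_rpow (x := 2 * C₁ * C₃) (by positivity) (by positivity),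
          Real.mul_rpow (x := (D : ℝ) ^ (t / 4)) (by positivity) (by positivity),
          Real.mul_rpow (x := 12 * C₂) (by positivity) (by positivity), ← Real.rpow_mul hD0.le,
          ← Real.rpow_mul hD0.le, ← Real.rpow_mul hM0.le]
        ring
    _ ≤ _ := by
        rw [← Real.rpow_add hD0]
        have e : -(1 - 1 / (p : ℝ)) * (1 - t) = -((1 - t) * (1 - 1 / (p : ℝ))) := by ring
        rw [e]
        gcongr
        nlinarith

/-- Bound for the sieve kernel. -/
theorem exists_sieve_bilinearBound {p : ℕ} {r s t : ℝ} (hp : 1 ≤ p) (hs : 0 < s)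
    (hps : 1 / s = 1 - 1 / (2 * (p : ℝ))) (hr : 0 < r) (ht0 : 0 < t) (ht1 : t < 1)
    (hrt : 1 / r = (1 - t) / s + t / 2) :
    ∃ C : ℝ, 0 < C ∧ ∀ (N y R : ℕ) (b : ℤ), 1 ≤ y → y ≤ N → 1 ≤ R →
      (2 * (R : ℝ) ^ 2) ^ (p + 4) ≤ N / y →
      BilinearBound N y b r (fun n => sieveSum y R n ^ 2 / sieveMass y R / (N / y))
        (C * ((N : ℝ) / y) ^ (-((1 - t) * (1 - 1 / (p : ℝ))))) := by
  obtain ⟨C, hC, h⟩ := exists_sieve_block_bilinearBound hp hs hps hr ht0 ht1 hrt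
  set ρ : ℝ := (2 : ℝ) ^ (-(t / 4)) with hρ
  have hρ0 : 0 < ρ := by positivity
  have hρ1 : ρ < 1 := Real.rpow_lt_one_of_one_lt_of_neg (by norm_num) (by linarith)
  have h1ρ : 0 < 1 - ρ := by linarith
  refine ⟨C * (1 - ρ)⁻¹, by positivity, fun N y R b hy hyN hR hbig => ?_⟩
  set J := Nat.log 2 (R ^ 2) + 1 with hJ
  have hR2 : R ^ 2 ≠ 0 := by positivity
  have hR1 : (1 : ℝ) ≤ R := by exact_mod_cast hR
  have h2R : (1 : ℝ) ≤ 2 * (R : ℝ) ^ 2 := by nlinarith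
  let 𝓠 : ℕ → Finset ℕ := fun j => (sieveModuli y (R ^ 2)).filter fun q => Nat.log 2 q = j
  have hblock : ∀ j ∈ Finset.range J, BilinearBound N y b r
      (fun n => ∑ q ∈ 𝓠 j, sieveCoeff y R q / sieveMass y R / (N / y) * ramanujanSum n q)
      (C * ρ ^ j * ((N : ℝ) / y) ^ (-((1 - t) * (1 - 1 / (p : ℝ))))) := by
    intro j hj
    have hjR : 2 ^ j ≤ R ^ 2 := Nat.pow_le_of_le_log hR2 (by
      have := Finset.mem_range.1 hj; omega)
    have hDR : ((2 ^ (j + 1) : ℕ) : ℝ) ≤ 2 * (R : ℝ) ^ 2 := by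
      have : 2 ^ (j + 1) ≤ 2 * R ^ 2 := by rw [pow_succ]; omega
      exact_mod_cast this
    have hq : ∀ q ∈ 𝓠 j, 2 ^ j ≤ q ∧ q < 2 ^ (j + 1) ∧ q ∈ sieveModuli y (R ^ 2) := by
      intro q hq
      obtain ⟨hq, hl⟩ := Finset.mem_filter.1 hq
      have hq0 : q ≠ 0 := by have := (mem_sieveModuli.1 hq).1.1; omega
      exact ⟨Nat.pow_le_of_le_log hq0 hl.ge, Nat.lt_pow_of_log_lt (by norm_num) (by omega), hq⟩
    have hpow : ∀ k ≤ p + 4, ((2 ^ (j + 1) : ℕ) : ℝ) ^ k ≤ N / y := fun k hk =>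
      calc ((2 ^ (j + 1) : ℕ) : ℝ) ^ k ≤ (2 * (R : ℝ) ^ 2) ^ k := by gcongr
        _ ≤ (2 * (R : ℝ) ^ 2) ^ (p + 4) := pow_le_pow_right₀ h2R hk
        _ ≤ _ := hbig
    refine (h N y R (2 ^ (j + 1)) b (𝓠 j) hy hyN hR Nat.one_le_two_pow (hpow p (by omega))
      (hpow 4 (by omega)) ?_ ?_).mono_right ?_
    · intro q hq'
      obtain ⟨h1, h2, h3⟩ := hq q hq'
      have := mem_sieveModuli.1 h3
      exact mem_sieveModuli.2 ⟨⟨this.1.1, h2.le⟩, this.2⟩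
    · intro q hq'
      have := (hq q hq').1
      rw [pow_succ]; omega
    · gcongr
      push_cast
      rw [← Real.rpow_natCast 2 (j + 1), ← Real.rpow_mul (by norm_num), hρ, ← Real.rpow_natCast,
        ← Real.rpow_mul (by norm_num)]
      apply Real.rpow_le_rpow_of_exponent_le (by norm_num)
      push_cast
      nlinarith
  refine ((BilinearBound.sum (Finset.range J) hblock).mono fun n _ => le_of_eq ?_).mono_right ?_
  · rw [Finset.sum_fiberwise_of_maps_to, sieveSum_sq, Finset.sum_div, Finset.sum_div]
    · refine Finset.sum_congr rfl fun q _ => ?_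
      ring
    · intro q hq
      refine Finset.mem_range.2 (Nat.lt_succ_of_le (Nat.log_mono_right ?_))
      exact (mem_sieveModuli.1 hq).1.2
  · rw [← Finset.sum_mul, ← Finset.mul_sum]
    gcongr
    rw [← tsum_geometric_of_lt_one hρ0.le hρ1]
    exact (summable_geometric_of_lt_one hρ0.le hρ1).sum_le_tsum _ fun _ _ => by positivity

/-- The prime powers of the window which share a factor with some sieve modulus. -/
def sievedPrimePowers (N y R : ℕ) (b : ℤ) : Finset ℕ :=
  open Classical in
  (residueWindow N y b).filter fun n => IsPrimePow n ∧ ¬ ∀ m ∈ sieveModuli y R, Nat.Coprime m n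

lemma card_sievedPrimePowers_le (N y R : ℕ) (b : ℤ) :
    (sievedPrimePowers N y R b).card ≤ R * (Nat.log 2 N + 1) := by
  classical
  have hsub : sievedPrimePowers N y R b ⊆
      (Finset.Icc 1 R ×ˢ Finset.range (Nat.log 2 N + 1)).image fun x => x.1 ^ x.2 := by
    intro n hn
    obtain ⟨hnw, hpp, hnc⟩ := Finset.mem_filter.1 hn
    have hnN : n < N := Finset.mem_range.1 (Finset.mem_filter.1 hnw).1
    obtain ⟨ℓ, k, hℓ, hk, rfl⟩ := (isPrimePow_nat_iff n).1 hpp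
    push Not at hnc
    obtain ⟨m, hm, hmn⟩ := hnc
    have hm1 := (mem_sieveModuli.1 hm).1
    have hdvd : ℓ ∣ m := by
      by_contra hd
      exact hmn (Nat.Coprime.pow_right k ((Nat.Prime.coprime_iff_not_dvd hℓ).2 hd).symm)
    refine Finset.mem_image.2 ⟨(ℓ, k), Finset.mem_product.2 ⟨Finset.mem_Icc.2
      ⟨hℓ.one_le, (Nat.le_of_dvd (by omega) hdvd).trans hm1.2⟩, Finset.mem_range.2 ?_⟩, rfl⟩
    refine Nat.lt_succ_of_le (Nat.le_log_of_pow_le (by norm_num) ?_)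
    exact (Nat.pow_le_pow_left hℓ.two_le k).trans hnN.le
  refine (Finset.card_le_card hsub).trans (Finset.card_image_le.trans ?_)
  simp

lemma mul_log_rpow_le {p : ℝ} (hp : 1 ≤ p) {N : ℕ} (hN : 1 ≤ N) :
    ((Nat.log 2 N + 1 : ℕ) : ℝ) * Real.log N ^ p ≤
      (4 * p + 5) ^ (p + 1) * (N : ℝ) ^ (1 / 2 : ℝ) := by
  have hN1 : (1 : ℝ) ≤ N := by exact_mod_cast hN
  have hN0 : (0 : ℝ) < N := by linarith
  set ε : ℝ := 1 / (2 * (p + 1)) with hε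
  have hε0 : 0 < ε := by positivity
  have hL : 1 ≤ (N : ℝ) ^ ε := Real.one_le_rpow hN1 hε0.le
  have hlog0 : 0 ≤ Real.log N := Real.log_nonneg hN1
  have hlog : Real.log N ≤ 2 * (p + 1) * (N : ℝ) ^ ε := by
    refine (Real.log_le_rpow_div hN0.le hε0).trans (le_of_eq ?_)
    rw [hε]; field_simp
  have h1 : Real.log N ≤ (4 * p + 5) * (N : ℝ) ^ ε := hlog.trans (by gcongr; linarith)
  have h2 : ((Nat.log 2 N + 1 : ℕ) : ℝ) ≤ (4 * p + 5) * (N : ℝ) ^ ε := by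
    have h3 : (Nat.log 2 N : ℝ) ≤ 2 * Real.log N := by
      refine (Real.natLog_le_logb N 2).trans ?_
      rw [Real.logb, div_le_iff₀ (Real.log_pos (by norm_num))]
      have := Real.log_two_gt_d9
      push_cast
      nlinarith
    push_cast
    nlinarith
  calc _ ≤ ((4 * p + 5) * (N : ℝ) ^ ε) * ((4 * p + 5) * (N : ℝ) ^ ε) ^ p := by gcongr
    _ = ((4 * p + 5) * (N : ℝ) ^ ε) ^ (p + 1) := by
        rw [Real.rpow_add_one (by positivity), mul_comm]
    _ = _ := by
        rw [Real.mul_rpow (by positivity) (by positivity), ← Real.rpow_mul hN0.le]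
        congr 2
        rw [hε]; field_simp

/-- Bound for the contribution of the prime powers removed by the sieve. -/
lemma bilinearBound_sievedPrimePowers {p r : ℝ} (hp : 1 ≤ p) (hr : 0 < r)
    (hpr : 1 / r = 1 - 1 / (2 * p)) {N y R : ℕ} (b : ℤ) (hy : 1 ≤ y) (hyR : y ≤ R)
    (hRN : R ^ 4 ≤ N) :
    BilinearBound N y b r
      (fun n => if n ∈ sievedPrimePowers N y R b then
        (Nat.totient y : ℝ) / N * ArithmeticFunction.vonMangoldt n else 0)
      ((4 * p + 5) ^ (p + 1) * ((N : ℝ) / y) ^ (-(1 - 1 / p))) := by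
  have hR : 1 ≤ R := hy.trans hyR
  have hN : 1 ≤ N := (Nat.one_le_pow _ _ hR).trans hRN
  have hN1 : (1 : ℝ) ≤ N := by exact_mod_cast hN
  have hy0 : (0 : ℝ) < y := by exact_mod_cast hy
  have hN0 : (0 : ℝ) < N := by linarith
  have hp0 : 0 < p := by linarith
  have hyR' : (y : ℝ) ≤ R := by exact_mod_cast hyR
  have hR0 : (0 : ℝ) < R := by linarith
  set K : ℝ := (4 * p + 5) ^ (p + 1) with hK
  have hK1 : 1 ≤ K := Real.one_le_rpow (by linarith) (by linarith)
  refine bilinearBound_young hp hr hpr (by positivity) ?_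
  have hsq : (R : ℝ) ^ 2 ≤ (N : ℝ) ^ (1 / 2 : ℝ) := by
    rw [← Real.sqrt_eq_rpow]
    refine Real.le_sqrt_of_sq_le ?_
    rw [← pow_mul]
    exact_mod_cast hRN
  have hM : (R : ℝ) * (N : ℝ) ^ (1 / 2 : ℝ) ≤ N / y := by
    rw [le_div_iff₀ hy0]
    calc (R : ℝ) * (N : ℝ) ^ (1 / 2 : ℝ) * y ≤ R * (N : ℝ) ^ (1 / 2 : ℝ) * R := by gcongr
      _ = (R : ℝ) ^ 2 * (N : ℝ) ^ (1 / 2 : ℝ) := by ring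
      _ ≤ (N : ℝ) ^ (1 / 2 : ℝ) * (N : ℝ) ^ (1 / 2 : ℝ) := by gcongr
      _ = N := by rw [← Real.rpow_add hN0]; norm_num
  have hφ : (Nat.totient y : ℝ) ≤ y := by exact_mod_cast Nat.totient_le y
  calc _ = ∑ n ∈ sievedPrimePowers N y R b,
        |(Nat.totient y : ℝ) / N * ArithmeticFunction.vonMangoldt n| ^ p := by
        symm
        refine Finset.sum_subset_zero_on_sdiff (Finset.filter_subset _ _) (fun n hn => ?_)
          fun n hn => ?_
        · rw [if_neg (Finset.mem_sdiff.1 hn).2, abs_zero, Real.zero_rpow hp0.ne']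
        · rw [if_pos hn]
    _ ≤ ∑ n ∈ sievedPrimePowers N y R b, ((y : ℝ) / N * Real.log N) ^ p := by
        refine Finset.sum_le_sum fun n hn => ?_
        have hnN : n < N := Finset.mem_range.1 (Finset.mem_filter.1 (Finset.mem_filter.1 hn).1).1
        have hn0 : 0 < n := (Finset.mem_filter.1 hn).2.1.pos
        have hΛ := @ArithmeticFunction.vonMangoldt_nonneg n
        rw [abs_of_nonneg (by positivity)]
        gcongr
        exact ArithmeticFunction.vonMangoldt_le_log.trans
          (Real.log_le_log (by exact_mod_cast hn0) (by exact_mod_cast hnN.le))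
    _ = ((sievedPrimePowers N y R b).card : ℝ) * ((y : ℝ) / N * Real.log N) ^ p := by
        rw [Finset.sum_const, nsmul_eq_mul]
    _ ≤ ((R * (Nat.log 2 N + 1) : ℕ) : ℝ) * ((y : ℝ) / N * Real.log N) ^ p := by
        have := Real.log_nonneg hN1
        gcongr
        exact card_sievedPrimePowers_le N y R b
    _ = R * (((Nat.log 2 N + 1 : ℕ) : ℝ) * Real.log N ^ p) * ((y : ℝ) / N) ^ p := by
        rw [Real.mul_rpow (by positivity) (Real.log_nonneg hN1)]
        push_cast; ring
    _ ≤ R * (K * (N : ℝ) ^ (1 / 2 : ℝ)) * ((y : ℝ) / N) ^ p := by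
        have := mul_log_rpow_le hp hN
        gcongr ?_ * ?_
        gcongr ?_ * ?_
    _ = K * (R * (N : ℝ) ^ (1 / 2 : ℝ)) * ((y : ℝ) / N) ^ p := by ring
    _ ≤ K ^ p * (N / y) * ((y : ℝ) / N) ^ p := by
        gcongr
        exact Real.self_le_rpow_of_one_le hK1 hp
    _ = _ := by
        rw [Real.mul_rpow (by positivity) (by positivity),
          ← Real.rpow_mul (x := (N : ℝ) / y) (by positivity),
          ← inv_div (N : ℝ) y, Real.inv_rpow (by positivity), ← Real.rpow_neg (by positivity),
          mul_assoc, mul_comm ((N : ℝ) / y), ← Real.rpow_add_one (by positivity)]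
        have : -p + 1 = -(1 - 1 / p) * p := by field_simp; ring
        rw [this]

/-- Pointwise comparison of the von Mangoldt function with the sieve weight. -/
lemma vonMangoldt_le_sievedPrimePowers_add {N y R κ : ℕ} {b : ℤ} (hy : 1 ≤ y)
    (hyR : y ^ 2 ≤ R) (hN : N < (R + 1) ^ κ) {n : ℕ} (hn : n ∈ residueWindow N y b) :
    (Nat.totient y : ℝ) / N * ArithmeticFunction.vonMangoldt n ≤
      (if n ∈ sievedPrimePowers N y R b then
        (Nat.totient y : ℝ) / N * ArithmeticFunction.vonMangoldt n else 0) +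
      4 * κ * (sieveSum y R n ^ 2 / sieveMass y R / (N / y)) := by
  have hG : 0 < sieveMass y R :=
    one_pos.trans_le (one_le_sieveMass y ((Nat.one_le_pow _ _ hy).trans hyR))
  have h0 : 0 ≤ 4 * κ * (sieveSum y R n ^ 2 / sieveMass y R / (N / y)) := by positivity
  split_ifs with hS
  · linarith
  rw [zero_add]
  by_cases hpp : IsPrimePow n
  swap
  · rwa [ArithmeticFunction.vonMangoldt_eq_zero_iff.2 hpp, mul_zero]
  have hnN : n < N := Finset.mem_range.1 (Finset.mem_filter.1 hn).1
  have hcop : ∀ m ∈ sieveModuli y R, Nat.Coprime m n := by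
    by_contra h
    exact hS (Finset.mem_filter.2 ⟨hn, hpp, h⟩)
  have hy0 : (0 : ℝ) < y := by exact_mod_cast hy
  have hN0 : (0 : ℝ) < N := by exact_mod_cast (Nat.zero_le n).trans_lt hnN
  have hmass := totient_mul_log_le_sieveMass hy hyR
  have hΛ : ArithmeticFunction.vonMangoldt n ≤ κ * Real.log (R + 1) := by
    calc _ ≤ Real.log n := ArithmeticFunction.vonMangoldt_le_log
      _ ≤ Real.log (((R : ℝ) + 1) ^ κ) := by
        refine Real.log_le_log (by exact_mod_cast hpp.pos) ?_
        exact_mod_cast (hnN.trans hN).le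
      _ = _ := Real.log_pow _ _
  rw [sieveSum_of_coprime hcop]
  calc _ ≤ (Nat.totient y : ℝ) / N * (κ * Real.log (R + 1)) := by gcongr
    _ = κ * (y / N) * ((Nat.totient y : ℝ) / y * Real.log (R + 1)) := by field_simp
    _ ≤ κ * (y / N) * (4 * sieveMass y R) := by gcongr
    _ = _ := by field_simp

lemma two_mul_sq_pow_le_exp {δ : ℝ} (hδ : 0 < δ) (κ : ℕ) {y : ℕ} (hy : 1 ≤ y) :
    ((2 * y ^ 2 : ℕ) : ℝ) ^ κ ≤ Real.exp (κ * (1 + 2 / δ) * (y : ℝ) ^ δ) := by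
  have hy1 : (1 : ℝ) ≤ y := by exact_mod_cast hy
  have h1 : (1 : ℝ) ≤ (y : ℝ) ^ δ := Real.one_le_rpow hy1 hδ.le
  have h2 : (2 : ℝ) ≤ Real.exp ((y : ℝ) ^ δ) := by
    have := Real.add_one_le_exp ((y : ℝ) ^ δ); linarith
  have h3 : (y : ℝ) ≤ Real.exp ((y : ℝ) ^ δ / δ) := by
    rw [← Real.log_le_iff_le_exp (by linarith)]
    exact Real.log_le_rpow_div (by linarith) hδ
  calc ((2 * y ^ 2 : ℕ) : ℝ) ^ κ ≤
        (Real.exp ((y : ℝ) ^ δ) * Real.exp ((y : ℝ) ^ δ / δ) ^ 2) ^ κ := by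
        push_cast; gcongr
    _ = _ := by
        rw [← Real.exp_nat_mul, ← Real.exp_add, ← Real.exp_nat_mul]
        congr 1
        push_cast
        ring

lemma exists_pow_le_lt_succ_pow {κ : ℕ} (hκ : κ ≠ 0) (N : ℕ) :
    ∃ R : ℕ, R ^ κ ≤ N ∧ N < (R + 1) ^ κ :=
  ⟨Nat.nthRoot κ N, Nat.pow_nthRoot_le (Or.inl hκ), Nat.lt_pow_nthRoot_add_one hκ N⟩

theorem improving_inequality :
    ∀ r : ℝ, 1 < r → r < 2 →
      ∃ C : ℝ, 0 < C ∧
        ∀ δ : ℝ, 0 < δ →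
          ∃ Crδ : ℝ, 0 < Crδ ∧
            ∀ y : ℕ, 1 ≤ y →
              ∀ N : ℕ, Real.exp (Crδ * (y : ℝ) ^ δ) < (N : ℝ) →
                ∀ b : ℤ, Int.gcd b y = 1 →
                  ∀ f : ℤ → ℝ, (Function.support f).Finite →
                    lpNorm (r / (r - 1)) (pavg N y b f) ≤
                      ENNReal.ofReal
                          (C * ((y : ℝ) / (N : ℝ)) ^ (1 / r - 1 / (r / (r - 1)))) *
                        lpNorm r f := by
  intro r hr1 hr2
  have hr0 : 0 < r := by linarith
  obtain ⟨p, s, t, hp, hs, hps, ht0, ht1, hrt, hexp⟩ := exists_interpolation_exponents hr1 hr2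
  obtain ⟨C, hC, hsieve⟩ := exists_sieve_bilinearBound hp hs hps hr0 ht0 ht1 hrt
  set q : ℝ := r / (r - 1) / 2 with hq
  have hr1' : 0 < r - 1 := by linarith
  have hq1 : 1 ≤ q := by
    rw [hq, le_div_iff₀ two_pos, le_div_iff₀ hr1']; linarith
  have hqr : 1 / r = 1 - 1 / (2 * q) := by rw [hq]; field_simp; ring
  have hqe : 1 - 1 / q = 1 / r - 1 / (r / (r - 1)) := by rw [hq]; field_simp; ring
  set κ : ℕ := 3 * (p + 4) + 1 with hκ
  refine ⟨(4 * q + 5) ^ (q + 1) + 4 * κ * C, by positivity, fun δ hδ =>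
    ⟨κ * (1 + 2 / δ), by positivity, fun y hy N hN b _ f hf => ?_⟩⟩
  have hbig : (2 * y ^ 2) ^ κ < N := by
    exact_mod_cast (two_mul_sq_pow_le_exp hδ κ hy).trans_lt hN
  obtain ⟨R, hRN, hNR⟩ := exists_pow_le_lt_succ_pow (κ := κ) (by omega) N
  have hyR : 2 * y ^ 2 ≤ R := Nat.lt_succ_iff.1 (lt_of_pow_lt_pow_left₀ κ (by omega)
    (hbig.trans hNR))
  have hyy : y ≤ y ^ 2 := Nat.le_self_pow two_ne_zero y
  have hR2 : 2 ≤ R := by omega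
  have hR4 : R ^ 4 ≤ N := (Nat.pow_le_pow_right (by omega) (by omega)).trans hRN
  have hRle : R ≤ N := (Nat.le_self_pow (by omega) R).trans hRN
  have hy0 : (0 : ℝ) < y := by exact_mod_cast hy
  have hpow : (2 * (R : ℝ) ^ 2) ^ (p + 4) ≤ N / y := by
    rw [le_div_iff₀ hy0]
    have : (2 * R ^ 2) ^ (p + 4) * y ≤ N :=
      calc (2 * R ^ 2) ^ (p + 4) * y ≤ (R * R ^ 2) ^ (p + 4) * R := by
            gcongr; omega
        _ = R ^ κ := by rw [hκ]; ring
        _ ≤ N := hRN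
    exact_mod_cast this
  have hsmall := bilinearBound_sievedPrimePowers (R := R) hq1 hr0 hqr b hy (by omega) hR4
  have hlarge := (hsieve N y R b hy (by omega) (by omega) hpow).const_mul
    (c := 4 * κ) (by positivity)
  have hbil := (hsmall.add hlarge).mono fun n hn =>
    vonMangoldt_le_sievedPrimePowers_add hy (by omega) hNR hn
  rw [hqe, hexp] at hbil
  have hM : ((N : ℝ) / y) ^ (-(1 / r - 1 / (r / (r - 1)))) =
      ((y : ℝ) / N) ^ (1 / r - 1 / (r / (r - 1))) := by
    rw [Real.rpow_neg (by positivity), ← Real.inv_rpow (by positivity), inv_div]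
  rw [hM] at hbil
  refine lpNorm_pavg_le_of_bilinear hr1 (by positivity) (fun E u v hu hv => ?_) hf
  rw [primeKernel_eq_windowKernel]
  refine (hbil.mono_right (le_of_eq ?_)) E u v hu hv
  ring

end
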